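/- arXiv:math-ph/9905008 — 3 statements merged into one kernel-verified Lean document; each statement's English description precedes it below -/
import Mathlib

section
/- Let λ ∈ ℝ \ {0}, let α ∈ (0,1) be irrational, and let E belong to the spectrum of H_{λ,α,θ'} for some θ' ∈ [0,1). Then lim_{|w|→∞, w ∈ W_α} (1/|w|)·ln‖M(λ,E,w)‖ = 0; that is, for every ε > 0 there exists N ∈ ℕ such that every w ∈ W_α with |w| ≥ N satisfies |(1/|w|)·ln‖M(λ,E,w)‖| ≤ ε. -/
open scoped Classical

noncomputable section

/-- The Sturmian potential `v_{α,θ}(n) = χ_{[1-α,1)}(nα + θ mod 1)`. -/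
def sturmian (α θ : ℝ) (n : ℤ) : ℝ :=
  if Int.fract (n * α + θ) ∈ Set.Ico (1 - α) 1 then 1 else 0

/-- Iterates of the Gauss map, starting at `α`. -/
def cfGauss (α : ℝ) : ℕ → ℝ
  | 0 => α
  | n + 1 => Int.fract (cfGauss α n)⁻¹

/-- The continued fraction coefficients `a_n` of `α = [a_1, a_2, …]` (for `n ≥ 1`):
`a_1 = ⌊1/α⌋`, `a_2 = ⌊1/fract(1/α)⌋`, … . -/
def cfCoeff (α : ℝ) (n : ℕ) : ℕ := ⌊(cfGauss α (n - 1))⁻¹⌋₊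

/-- The standard words, with an index shift: `sWord a n` is `s_{n-1}`.  Thus
`sWord a 0 = s_{-1} = 1`, `sWord a 1 = s_0 = 0`, `sWord a 2 = s_1 = 0^{a_1 - 1} 1`, and
`sWord a (n+1) = s_n = s_{n-1}^{a_n} s_{n-2}` for `n ≥ 2`. -/
def sWord (a : ℕ → ℕ) : ℕ → List ℝ
  | 0 => [1]
  | 1 => [0]
  | 2 => List.replicate (a 1 - 1) (0 : ℝ) ++ [1]
  | n + 3 => (List.replicate (a (n + 2)) (sWord a (n + 2))).flatten ++ sWord a (n + 1)

/-- The `n`-th letter (for `n ≥ 1`) of the one-sided infinite word `c_α = lim s_n`: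
since `|s_n| ≥ n`, it is the `n`-th letter of `s_n`. -/
def cword (α : ℝ) (n : ℕ) : ℝ := (sWord (cfCoeff α) (n + 1)).getD (n - 1) 0

/-- `w` is a (finite) prefix of the one-sided infinite word `c_α`. -/
def IsPrefC (α : ℝ) (w : List ℝ) : Prop :=
  w = (List.range w.length).map fun i => cword α (i + 1)

/-- The one-step transfer matrix `T(λ,E,a) = [[E - λa, -1], [1, 0]]`. -/
def transferT (lam : ℝ) (E : ℂ) (a : ℝ) : Matrix (Fin 2) (Fin 2) ℂ :=
  !![E - lam * a, -1; 1, 0]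

/-- The transfer matrix over a word `w = w_1 … w_n`:
`M(λ,E,w) = T(λ,E,w_n) ⋯ T(λ,E,w_1)`. -/
def transferM (lam : ℝ) (E : ℂ) : List ℝ → Matrix (Fin 2) (Fin 2) ℂ
  | [] => 1
  | a :: w => transferM lam E w * transferT lam E a

/-- The operator norm on `ℂ²` (with the euclidean norm) of a `2 × 2` complex matrix. -/
def opNorm (A : Matrix (Fin 2) (Fin 2) ℂ) : ℝ :=
  ‖Matrix.toEuclideanCLM (𝕜 := ℂ) A‖

/-- The word `v_{α,θ}^n = v_{α,θ}(1) … v_{α,θ}(n)`. -/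
def sturmianWord (α θ : ℝ) (n : ℕ) : List ℝ :=
  (List.range n).map fun k => sturmian α θ (k + 1)

/-- The set of finite nonempty subwords of a two-sided sequence `v : ℤ → ℝ`. -/
def SubZ (v : ℤ → ℝ) : Set (List ℝ) :=
  {w | w ≠ [] ∧ ∃ k : ℤ, w = (List.range w.length).map fun i => v (k + i)}

/-- The set of finite nonempty subwords of the one-sided word `c_α` (indexed from `1`). -/
def SubC (α : ℝ) : Set (List ℝ) :=
  {w | w ≠ [] ∧ ∃ k : ℕ, 1 ≤ k ∧ w = (List.range w.length).map fun i => cword α (k + i)}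

/-- `W_α`, the set of all finite nonempty subwords of the sequences `v_{α,θ}`, `θ ∈ [0,1)`. -/
def Walpha (α : ℝ) : Set (List ℝ) :=
  {w | ∃ θ ∈ Set.Ico (0 : ℝ) 1, w ∈ SubZ (sturmian α θ)}

/-- `α` is a bounded density number: `limsup_{n→∞} (1/n) ∑_{j=1}^n a_j < ∞` for the
continued fraction coefficients `a_j` of `α`. -/
def BoundedDensity (α : ℝ) : Prop :=
  Filter.IsBoundedUnder (· ≤ ·) Filter.atTop
    (fun n : ℕ => (1 / n : ℝ) * ∑ j ∈ Finset.Icc 1 n, (cfCoeff α j : ℝ))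

end

noncomputable def sturmF (α x : ℝ) : ℝ := if Int.fract x ∈ Set.Ico (1 - α) 1 then 1 else 0

noncomputable def sturmW (α x : ℝ) (n : ℕ) : List ℝ := (List.range n).map fun i : ℕ => sturmF α (x + i * α)

lemma sturmF_add_int (α x : ℝ) (k : ℤ) : sturmF α (x + k) = sturmF α x := by
  simp [sturmF, Int.fract_add_intCast]

lemma sturmW_add_int (α x : ℝ) (k : ℤ) (n : ℕ) : sturmW α (x + k) n = sturmW α x n := by
  unfold sturmW
  congr 1
  funext i
  rw [show x + k + i * α = (x + i * α) + k by ring, sturmF_add_int]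

lemma sturmW_add (α x : ℝ) (j k : ℕ) :
    sturmW α x (j + k) = sturmW α x j ++ sturmW α (x + j * α) k := by
  unfold sturmW
  rw [List.range_add, List.map_append, List.map_map]
  congr 2
  funext i
  simp only [Function.comp]
  congr 1
  push_cast
  ring

lemma transferM_append (lam : ℝ) (E : ℂ) (w w' : List ℝ) :
    transferM lam E (w ++ w') = transferM lam E w' * transferM lam E w := by
  induction w with
  | nil => simp [transferM]
  | cons a w ih => simp [transferM, ih, mul_assoc]

lemma transferM_det (lam : ℝ) (E : ℂ) (w : List ℝ) : (transferM lam E w).det = 1 := by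
  induction w with
  | nil => simp [transferM]
  | cons a w ih => simp [transferM, ih, transferT, Matrix.det_fin_two]

abbrev V2 := EuclideanSpace ℂ (Fin 2)

noncomputable def act (A : Matrix (Fin 2) (Fin 2) ℂ) (x : V2) : V2 := Matrix.toEuclideanCLM (𝕜 := ℂ) A x

lemma act_zero (A : Matrix (Fin 2) (Fin 2) ℂ) (x : V2) :
    (act A x) 0 = A 0 0 * x 0 + A 0 1 * x 1 := by
  simp [act, Matrix.ofLp_toEuclideanCLM, Matrix.mulVec, dotProduct, Fin.sum_univ_two]

lemma act_one (A : Matrix (Fin 2) (Fin 2) ℂ) (x : V2) :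
    (act A x) 1 = A 1 0 * x 0 + A 1 1 * x 1 := by
  simp [act, Matrix.ofLp_toEuclideanCLM, Matrix.mulVec, dotProduct, Fin.sum_univ_two]

lemma act_le (A : Matrix (Fin 2) (Fin 2) ℂ) (x : V2) : ‖act A x‖ ≤ opNorm A * ‖x‖ :=
  ContinuousLinearMap.le_opNorm _ _

lemma act_mul (A B : Matrix (Fin 2) (Fin 2) ℂ) (x : V2) : act (A * B) x = act A (act B x) := by
  simp [act, map_mul]

lemma act_add (A : Matrix (Fin 2) (Fin 2) ℂ) (x y : V2) : act A (x + y) = act A x + act A y := by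
  simp [act]

lemma act_sub (A : Matrix (Fin 2) (Fin 2) ℂ) (x y : V2) : act A (x - y) = act A x - act A y := by
  simp [act]

lemma act_smul (A : Matrix (Fin 2) (Fin 2) ℂ) (c : ℂ) (x : V2) : act A (c • x) = c • act A x := by
  simp [act]

lemma opNorm_nonneg (A : Matrix (Fin 2) (Fin 2) ℂ) : 0 ≤ opNorm A := norm_nonneg _

lemma opNorm_mul_le (A B : Matrix (Fin 2) (Fin 2) ℂ) : opNorm (A * B) ≤ opNorm A * opNorm B := by
  unfold opNorm
  rw [map_mul]
  exact norm_mul_le _ _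

lemma V2_norm_sq (x : V2) : ‖x‖ ^ 2 = ‖x 0‖ ^ 2 + ‖x 1‖ ^ 2 := by
  rw [EuclideanSpace.norm_sq_eq, Fin.sum_univ_two]

noncomputable def cross (x y : V2) : ℂ := x 0 * y 1 - x 1 * y 0

lemma cross_le (x y : V2) : ‖cross x y‖ ≤ ‖x‖ * ‖y‖ := by
  have h1 : ‖cross x y‖ ≤ ‖x 0‖ * ‖y 1‖ + ‖x 1‖ * ‖y 0‖ := by
    unfold cross
    refine (norm_sub_le _ _).trans ?_
    rw [norm_mul, norm_mul]
  refine h1.trans ?_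
  apply abs_le_of_sq_le_sq' _ (by positivity) |>.2
  rw [mul_pow, V2_norm_sq, V2_norm_sq]
  nlinarith [sq_nonneg (‖x 0‖ * ‖y 0‖ - ‖x 1‖ * ‖y 1‖)]

lemma cross_act (A : Matrix (Fin 2) (Fin 2) ℂ) (hA : A.det = 1) (x y : V2) :
    cross (act A x) (act A y) = cross x y := by
  unfold cross
  rw [act_zero, act_one, act_zero, act_one]
  rw [Matrix.det_fin_two] at hA
  linear_combination (x 0 * y 1 - x 1 * y 0) * hA

lemma one_le_opNorm (A : Matrix (Fin 2) (Fin 2) ℂ) (hA : A.det = 1) : 1 ≤ opNorm A := by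
  have h := cross_act A hA (EuclideanSpace.single 0 1) (EuclideanSpace.single 1 1)
  have h2 := cross_le (act A (EuclideanSpace.single 0 1)) (act A (EuclideanSpace.single 1 1))
  rw [h] at h2
  have h3 := act_le A (EuclideanSpace.single 0 1)
  have h4 := act_le A (EuclideanSpace.single 1 1)
  simp [cross] at h2 h3 h4
  nlinarith [norm_nonneg (act A (EuclideanSpace.single 0 1)), norm_nonneg (act A (EuclideanSpace.single 1 1)), opNorm_nonneg A]

/-- the deficiency inequality. -/
lemma deficient (A B : Matrix (Fin 2) (Fin 2) ℂ) (hA : A.det = 1) (e y : V2) (he : 0 < ‖e‖)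
    (hB : ‖act B e‖ ≤ 3 * ‖e‖) (hy : ‖y‖ ≤ 2 * ‖e‖)
    (herr : opNorm A * ‖act A y - e‖ ≤ ‖e‖) :
    opNorm (B * A) ≤ 3 * (opNorm A + opNorm B) := by
  have hA0 := opNorm_nonneg A
  have hB0 := opNorm_nonneg B
  refine ContinuousLinearMap.opNorm_le_bound _ (by positivity) fun x => ?_
  change ‖act (B * A) x‖ ≤ _
  rw [act_mul]
  set z := act A x with hz
  set ep : V2 := !₂[-(starRingEnd ℂ) (e 1), (starRingEnd ℂ) (e 0)] with hep
  have hepn : ‖ep‖ = ‖e‖ := by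
    have : ‖ep‖ ^ 2 = ‖e‖ ^ 2 := by
      rw [V2_norm_sq, V2_norm_sq]
      simp [hep]; ring
    exact (sq_eq_sq₀ (norm_nonneg _) (norm_nonneg _)).1 this
  set c : ℂ := (starRingEnd ℂ) (e 0) * z 0 + (starRingEnd ℂ) (e 1) * z 1 with hc
  have hcn : ‖c‖ ≤ ‖e‖ * ‖z‖ := by
    have := cross_le ep z
    rw [hepn] at this
    have h2 : cross ep z = -c := by simp [cross, hep, hc]; ring
    rwa [h2, norm_neg] at this
  have hdec : ((‖e‖ ^ 2 : ℝ) : ℂ) • z = c • e + (cross e z) • ep := by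
    have h : ((‖e‖ ^ 2 : ℝ) : ℂ) = (starRingEnd ℂ) (e 0) * e 0 + (starRingEnd ℂ) (e 1) * e 1 := by
      rw [V2_norm_sq]
      push_cast
      rw [← Complex.conj_mul', ← Complex.conj_mul']
    rw [h]
    ext i
    fin_cases i
    · simp [cross, hep, hc]; ring
    · simp [cross, hep, hc]; ring
  have hcr : ‖cross e z‖ ≤ 3 * ‖e‖ * ‖x‖ := by
    have h : cross e z = cross y x - cross (act A y - e) z := by
      rw [← cross_act A hA y x, ← hz]
      simp [cross]; ring
    rw [h]
    refine (norm_sub_le _ _).trans ?_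
    have h1 := cross_le y x
    have h2 := cross_le (act A y - e) z
    have h3 : ‖z‖ ≤ opNorm A * ‖x‖ := act_le A x
    have h4 : ‖act A y - e‖ * ‖z‖ ≤ ‖act A y - e‖ * (opNorm A * ‖x‖) := by gcongr
    have h5 : ‖y‖ * ‖x‖ ≤ 2 * ‖e‖ * ‖x‖ := by gcongr
    have h6 : opNorm A * ‖act A y - e‖ * ‖x‖ ≤ ‖e‖ * ‖x‖ := by gcongr
    nlinarith
  have hmain : ‖e‖ ^ 2 * ‖act B z‖ ≤ ‖c‖ * ‖act B e‖ + ‖cross e z‖ * ‖act B ep‖ := by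
    have : ((‖e‖ ^ 2 : ℝ) : ℂ) • act B z = c • act B e + (cross e z) • act B ep := by
      rw [← act_smul, hdec, act_add, act_smul, act_smul]
    have h2 := congrArg norm this
    rw [norm_smul, Complex.norm_real, Real.norm_of_nonneg (by positivity)] at h2
    rw [h2]
    refine (norm_add_le _ _).trans ?_
    rw [norm_smul, norm_smul]
  have h3 : ‖z‖ ≤ opNorm A * ‖x‖ := act_le A x
  have h4 : ‖act B ep‖ ≤ opNorm B * ‖e‖ := by rw [← hepn]; exact act_le B ep
  have h5 : ‖c‖ * ‖act B e‖ ≤ (‖e‖ * (opNorm A * ‖x‖)) * (3 * ‖e‖) := by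
    gcongr
    exact hcn.trans (by gcongr)
  have h6 : ‖cross e z‖ * ‖act B ep‖ ≤ (3 * ‖e‖ * ‖x‖) * (opNorm B * ‖e‖) := by gcongr
  have : ‖e‖ ^ 2 * ‖act B z‖ ≤ ‖e‖ ^ 2 * (3 * (opNorm A + opNorm B) * ‖x‖) := by nlinarith
  exact le_of_mul_le_mul_left this (by positivity)


lemma irr_ne (α : ℝ) (hirr : Irrational α) (m : ℕ) (hm : 0 < m) (p : ℤ) : (m : ℝ) * α - p ≠ 0 := by
  intro h
  exact (hirr.natCast_mul hm.ne').ne_int p (by linarith)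

lemma dirichlet_small (α : ℝ) (η : ℝ) (hη : 0 < η) :
    ∃ k : ℕ, 0 < k ∧ |(k : ℝ) * α - round ((k : ℝ) * α)| < η := by
  obtain ⟨n, hn⟩ := exists_nat_one_div_lt hη
  obtain ⟨k, hk, -, h⟩ := Real.exists_nat_abs_mul_sub_round_le α (n := n + 1) (by omega)
  refine ⟨k, hk, h.trans_lt (lt_of_le_of_lt ?_ hn)⟩
  push_cast
  apply one_div_le_one_div_of_le <;> [positivity; linarith]

lemma dioph_B (α : ℝ) (hirr : Irrational α) (n0 : ℕ) :
    ∃ n ≥ n0, ∃ δ : ℝ, 0 < δ ∧ δ ≤ 1 ∧ 1 / 4 ≤ n * δ ∧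
      ∀ i : ℕ, 1 ≤ i → i ≤ n → ∀ k : ℤ, δ ≤ |(i : ℝ) * α - k| := by
  set d : ℕ → ℝ := fun i => |(i : ℝ) * α - round ((i : ℝ) * α)| with hd
  obtain ⟨q, hq, hqmin⟩ := Finset.exists_min_image (Finset.Icc 1 (n0 + 1)) d ⟨1, by simp⟩
  rw [Finset.mem_Icc] at hq
  have hpos : 0 < d q := abs_pos.2 (irr_ne α hirr q (by omega) _)
  have hex : ∃ m : ℕ, 0 < m ∧ d m < d q := dirichlet_small α (d q) hpos
  set m := Nat.find hex with hm
  obtain ⟨hm0, hmq⟩ := Nat.find_spec hex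
  rw [← hm] at hm0 hmq
  have hmn : n0 + 1 < m := by
    by_contra hc
    have := hqmin m (Finset.mem_Icc.2 ⟨hm0, by omega⟩)
    linarith
  have hle : d q ≤ 1 := by
    have := abs_sub_round ((q : ℝ) * α)
    simp only [hd]; linarith
  have hkey : 1 ≤ 2 * m * d q := by
    set pq := round ((q : ℝ) * α) with hpq
    set pm := round ((m : ℝ) * α) with hpm
    have hdq : d q = |(q : ℝ) * α - pq| := rfl
    have hdm : d m = |(m : ℝ) * α - pm| := rfl
    have hqm : (q : ℝ) ≤ m := by exact_mod_cast (by omega : q ≤ m)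
    have hq1 : (1 : ℝ) ≤ q := by exact_mod_cast hq.1
    have hne : (m : ℤ) * pq - q * pm ≠ 0 := by
      intro h0
      have h0' : (m : ℝ) * pq - q * pm = 0 := by exact_mod_cast h0
      have : (m : ℝ) * ((q : ℝ) * α - pq) = q * ((m : ℝ) * α - pm) := by linarith
      have h2 := congrArg abs this
      rw [abs_mul, abs_mul, ← hdq, ← hdm, Nat.abs_cast, Nat.abs_cast] at h2
      nlinarith
    have h1 : (1 : ℝ) ≤ |(m : ℝ) * pq - q * pm| := by exact_mod_cast Int.one_le_abs hne
    have h2 : (m : ℝ) * pq - q * pm = q * ((m : ℝ) * α - pm) - m * ((q : ℝ) * α - pq) := by ring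
    rw [h2] at h1
    have h3 := abs_sub ((q : ℝ) * ((m : ℝ) * α - pm)) (m * ((q : ℝ) * α - pq))
    rw [abs_mul, abs_mul, ← hdq, ← hdm, Nat.abs_cast, Nat.abs_cast] at h3
    nlinarith
  refine ⟨m - 1, by omega, d q, hpos, hle, ?_, ?_⟩
  · have h1 : (m : ℝ) ≤ 2 * ((m - 1 : ℕ) : ℝ) := by
      exact_mod_cast (by omega : m ≤ 2 * (m - 1))
    nlinarith
  · intro i hi1 hi2 k
    have h1 : d q ≤ d i := by
      by_contra hc
      have := Nat.find_min hex (m := i) (by omega)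
      exact this ⟨by omega, not_le.1 hc⟩
    exact h1.trans (round_le _ _)

lemma small_step (α : ℝ) (hirr : Irrational α) (η0 : ℝ) (h0 : 0 < η0) :
    ∃ m : ℕ, 0 < m ∧ ∃ p : ℤ, 0 < (m : ℝ) * α - p ∧ (m : ℝ) * α - p < η0 := by
  obtain ⟨k, hk, h⟩ := dirichlet_small α (min η0 1) (by positivity)
  set p := round ((k : ℝ) * α)
  have hlt := lt_min_iff.1 h
  rcases lt_or_gt_of_ne (irr_ne α hirr k hk p) with hneg | hpos
  · set η := -((k : ℝ) * α - p) with hη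
    have hηp : 0 < η := by linarith
    rw [abs_of_neg hneg, ← hη] at hlt
    set N := ⌊1 / η⌋₊ with hN
    have hN1 : 1 ≤ N := by
      apply Nat.le_floor
      rw [le_div_iff₀ hηp]
      push_cast
      linarith
    have hNle : (N : ℝ) * η ≤ 1 := by
      have := Nat.floor_le (a := 1 / η) (by positivity)
      rwa [le_div_iff₀ hηp] at this
    have hNlt : 1 < ((N : ℝ) + 1) * η := by
      have := Nat.lt_floor_add_one (1 / η)
      rwa [div_lt_iff₀ hηp] at this
    have hkey : ((N * k : ℕ) : ℝ) * α - ((N * p - 1 : ℤ) : ℝ) = 1 - N * η := by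
      push_cast; rw [hη]; ring
    have hpos : 0 < N * k := by positivity
    refine ⟨N * k, hpos, N * p - 1, ?_, ?_⟩
    · refine lt_of_le_of_ne ?_ (irr_ne α hirr _ hpos _).symm
      rw [hkey]; linarith
    · rw [hkey]; linarith
  · rw [abs_of_pos hpos] at hlt
    exact ⟨k, hk, p, hpos, hlt.1⟩

lemma fract_lt_of (z s δ : ℝ) (k : ℤ) (h : z = k + s) (h0 : 0 ≤ s) (h1 : s < δ) :
    Int.fract z < δ := by
  have : Int.fract z = Int.fract s := by rw [h, Int.fract_intCast_add]
  rw [this]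
  have h2 : (0 : ℝ) ≤ ⌊s⌋ := by exact_mod_cast Int.floor_nonneg.2 h0
  have := Int.self_sub_floor s
  linarith

lemma visit_freq (α : ℝ) (hirr : Irrational α) (δ a : ℝ) (hδ : 0 < δ) (hδ1 : δ ≤ 1) (L0 : ℕ) :
    ∃ ℓ ≥ L0, ∀ x : ℝ, δ * ℓ / 4 ≤
      (((Finset.range ℓ).filter fun j : ℕ => Int.fract (x + j * α - a) < δ).card : ℝ) := by
  obtain ⟨m, hm, p, hη0, hηlt⟩ := small_step α hirr (min (δ / 4) (1 / (L0 + 1))) (by positivity)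
  set η := (m : ℝ) * α - p with hη
  obtain ⟨hη1, hη2⟩ := lt_min_iff.1 hηlt
  set N := ⌊δ / η⌋₊ with hN
  set I := ⌈2 / η⌉₊ with hI
  have hNle : (N : ℝ) * η ≤ δ := by
    have := Nat.floor_le (a := δ / η) (by positivity)
    rwa [le_div_iff₀ hη0] at this
  have hNlt : δ < ((N : ℝ) + 1) * η := by
    have := Nat.lt_floor_add_one (δ / η)
    rwa [div_lt_iff₀ hη0] at this
  have hIle : 2 ≤ (I : ℝ) * η := by
    have := Nat.le_ceil (2 / η)
    rwa [div_le_iff₀ hη0] at this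
  have hIlt : (I : ℝ) * η < 2 + η := by
    have := Nat.ceil_lt_add_one (a := 2 / η) (by positivity)
    rw [← hI] at this
    have h2 := mul_lt_mul_of_pos_right this hη0
    rwa [add_mul, div_mul_cancel₀ _ hη0.ne', one_mul] at h2
  refine ⟨m * I, ?_, fun x => ?_⟩
  · have h1 : (L0 : ℝ) * η ≤ 1 := by
      rw [lt_div_iff₀ (by positivity)] at hη2
      nlinarith
    have h2 : (L0 : ℝ) ≤ I := by
      by_contra hc
      push Not at hc
      nlinarith
    have h3 : L0 ≤ I := by exact_mod_cast h2
    nlinarith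
  · set i0 : ℕ → ℕ := fun r => ⌈(1 - Int.fract (x + r * α - a)) / η⌉₊ with hi0
    have hcard : m * N ≤ ((Finset.range (m * I)).filter
        fun j : ℕ => Int.fract (x + j * α - a) < δ).card := by
      have : (Finset.range m ×ˢ Finset.range N).card = m * N := by simp
      rw [← this]
      apply Finset.card_le_card_of_injOn (fun s => s.1 + m * (i0 s.1 + s.2))
      · rintro ⟨r, t⟩ hrt
        simp only [Finset.coe_product, Finset.coe_range, Set.mem_prod, Set.mem_Iio] at hrt
        obtain ⟨hr, ht⟩ := hrt
        simp only [Finset.coe_filter, Finset.mem_range, Set.mem_ofPred_eq]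
        set y := x + r * α - a with hy
        have hf0 := Int.fract_nonneg y
        have hf1 := Int.fract_lt_one y
        have e1 : 1 - Int.fract y ≤ (i0 r : ℝ) * η := by
          have := Nat.le_ceil ((1 - Int.fract y) / η)
          rwa [div_le_iff₀ hη0] at this
        have e2 : (i0 r : ℝ) * η < 1 - Int.fract y + η := by
          have := Nat.ceil_lt_add_one (a := (1 - Int.fract y) / η)
            (div_nonneg (by linarith) hη0.le)
          have h2 := mul_lt_mul_of_pos_right this hη0
          rwa [add_mul, div_mul_cancel₀ _ hη0.ne', one_mul] at h2
        have ht' : (t : ℝ) + 1 ≤ N := by exact_mod_cast ht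
        have e3 : ((t : ℝ) + 1) * η ≤ δ := (mul_le_mul_of_nonneg_right ht' hη0.le).trans hNle
        have e4 : 0 ≤ (t : ℝ) * η := by positivity
        constructor
        · have : ((i0 r + t : ℕ) : ℝ) * η < I * η := by
            push_cast
            nlinarith
          have h3 : ((i0 r + t : ℕ) : ℝ) < I := lt_of_mul_lt_mul_right this hη0.le
          have h4 : i0 r + t < I := by exact_mod_cast h3
          nlinarith
        · refine fract_lt_of _ (((i0 r : ℝ) * η - (1 - Int.fract y)) + t * η) δ
            (⌊y⌋ + 1 + (i0 r + t) * p) ?_ (by linarith) (by linarith)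
          have hyf := Int.self_sub_floor y
          have : x + ((r + m * (i0 r + t) : ℕ) : ℝ) * α - a
              = y + ((i0 r : ℝ) + t) * η + ((i0 r : ℝ) + t) * p := by
            push_cast; rw [hy, hη]; ring
          rw [this]
          push_cast
          rw [← hyf]
          ring
      · rintro ⟨r, t⟩ hrt ⟨r', t'⟩ hrt' heq
        simp only [Finset.coe_product, Finset.coe_range, Set.mem_prod, Set.mem_Iio] at hrt hrt'
        simp only at heq
        have hr : r = r' := by
          have := congrArg (· % m) heq
          simpa [Nat.add_mul_mod_self_left, Nat.mod_eq_of_lt hrt.1, Nat.mod_eq_of_lt hrt'.1] using this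
        subst hr
        have h2 : m * (i0 r + t) = m * (i0 r + t') := by omega
        have h3 := Nat.eq_of_mul_eq_mul_left hm h2
        have : t = t' := by omega
        rw [this]
    have hcard' : (m : ℝ) * N ≤ (((Finset.range (m * I)).filter
        fun j : ℕ => Int.fract (x + j * α - a) < δ).card : ℝ) := by exact_mod_cast hcard
    refine le_trans ?_ hcard'
    push_cast
    have : δ * I / 4 ≤ N := by
      have : (δ * I / 4) * η ≤ N * η := by nlinarith
      exact le_of_mul_le_mul_right this hη0
    have hm' : (0 : ℝ) ≤ m := by positivity
    nlinarith

lemma sturmF_floor (α : ℝ) (hα : α ∈ Set.Ioo (0 : ℝ) 1) (y : ℝ) :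
    sturmF α y = ((⌊y + α⌋ - ⌊y⌋ : ℤ) : ℝ) := by
  unfold sturmF
  have h0 := Int.fract_nonneg y
  have h1 := Int.fract_lt_one y
  have h2 := Int.self_sub_floor y
  obtain ⟨ha, hb⟩ := hα
  split_ifs with h
  · have : ⌊y + α⌋ = ⌊y⌋ + 1 := by
      rw [Int.floor_eq_iff]
      push_cast
      constructor <;> linarith [h.1]
    rw [this]; simp
  · have h' : Int.fract y < 1 - α := by
      by_contra hc
      exact h ⟨not_lt.1 hc, h1⟩
    have : ⌊y + α⌋ = ⌊y⌋ := by
      rw [Int.floor_eq_iff]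
      constructor <;> linarith
    rw [this]; simp

lemma word_interval (α : ℝ) (hα : α ∈ Set.Ioo (0 : ℝ) 1) (n : ℕ) (δ : ℝ) (hδ1 : δ ≤ 1)
    (hδ : ∀ i : ℕ, 1 ≤ i → i ≤ n → ∀ k : ℤ, δ ≤ |(i : ℝ) * α - k|) (x0 : ℝ) :
    ∃ a : ℝ, ∀ x : ℝ, Int.fract (x - a) < δ → sturmW α x n = sturmW α x0 n := by
  obtain ⟨j0, hj0, hmin⟩ := Finset.exists_min_image (Finset.range (n + 1))
    (fun j : ℕ => Int.fract (x0 + j * α)) ⟨0, by simp⟩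
  rw [Finset.mem_range] at hj0
  set a := x0 - Int.fract (x0 + j0 * α) with ha
  refine ⟨a, fun x hx => ?_⟩
  set z := x - (⌊x - a⌋ : ℤ) with hz
  have hz1 : a ≤ z := by have := Int.floor_le (x - a); linarith
  have hz2 : z < a + δ := by have := Int.self_sub_floor (x - a); linarith
  have hxz : x = z + (⌊x - a⌋ : ℤ) := by rw [hz]; ring
  rw [hxz, sturmW_add_int]
  have hfl : ∀ j : ℕ, j ≤ n → ⌊z + j * α⌋ = ⌊x0 + j * α⌋ := by
    intro j hj
    have hm := hmin j (Finset.mem_range.2 (by omega))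
    have s0 := Int.self_sub_floor (x0 + j0 * α)
    have s1 := Int.self_sub_floor (x0 + j * α)
    have s2 := Int.fract_lt_one (x0 + j * α)
    have s3 := Int.fract_nonneg (x0 + j0 * α)
    set P0 := ⌊x0 + j0 * α⌋ with hP0
    set P := ⌊x0 + j * α⌋ with hP
    rw [Int.floor_eq_iff]
    refine ⟨by linarith, ?_⟩
    have hpos : 0 < (P : ℝ) + 1 - (a + j * α) := by linarith
    have haj : a + j0 * α = P0 := by linarith
    suffices h : δ ≤ (P : ℝ) + 1 - (a + j * α) by linarith
    rcases lt_trichotomy j j0 with hlt | heq | hgt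
    · have h1 := hδ (j0 - j) (by omega) (by omega) (P0 - P - 1)
      rw [Nat.cast_sub hlt.le] at h1
      push_cast at h1
      have h2 : ((j0 : ℝ) - j) * α - ((P0 : ℝ) - P - 1) = (P : ℝ) + 1 - (a + j * α) := by linarith
      rwa [h2, abs_of_pos hpos] at h1
    · rw [heq] at hpos ⊢
      rw [haj] at hpos ⊢
      have h1 : (0 : ℤ) < P + 1 - P0 := by exact_mod_cast hpos
      have h2 : (1 : ℤ) ≤ P + 1 - P0 := h1
      have h3 : (1 : ℝ) ≤ (P : ℝ) + 1 - P0 := by exact_mod_cast h2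
      linarith
    · have h1 := hδ (j - j0) (by omega) (by omega) (P + 1 - P0)
      rw [Nat.cast_sub hgt.le] at h1
      push_cast at h1
      have h2 : ((j : ℝ) - j0) * α - ((P : ℝ) + 1 - P0) = -((P : ℝ) + 1 - (a + j * α)) := by
        linarith
      rwa [h2, abs_neg, abs_of_pos hpos] at h1
  unfold sturmW
  apply List.map_congr_left
  intro j hj
  rw [List.mem_range] at hj
  rw [sturmF_floor α hα, sturmF_floor α hα]
  have e1 := hfl j (by omega)
  have e2 := hfl (j + 1) (by omega)
  push_cast at e2
  rw [show z + j * α + α = z + ((j : ℝ) + 1) * α by ring,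
    show x0 + j * α + α = x0 + ((j : ℝ) + 1) * α by ring, e1, e2]

lemma visit_sep (α : ℝ) (n : ℕ) (δ : ℝ)
    (hδ : ∀ i : ℕ, 1 ≤ i → i ≤ n → ∀ k : ℤ, δ ≤ |(i : ℝ) * α - k|) (a x : ℝ) (j j' : ℕ)
    (h : j < j') (h1 : Int.fract (x + j * α - a) < δ) (h2 : Int.fract (x + j' * α - a) < δ) :
    j + n < j' := by
  by_contra hc
  have := hδ (j' - j) (by omega) (by omega) (⌊x + j' * α - a⌋ - ⌊x + j * α - a⌋)
  rw [Nat.cast_sub h.le] at this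
  push_cast at this
  have e1 := Int.self_sub_floor (x + j * α - a)
  have e2 := Int.self_sub_floor (x + j' * α - a)
  have e3 := Int.fract_nonneg (x + j * α - a)
  have e4 := Int.fract_nonneg (x + j' * α - a)
  have h5 : ((j' : ℝ) - j) * α - ((⌊x + j' * α - a⌋ : ℝ) - ⌊x + j * α - a⌋)
      = Int.fract (x + j' * α - a) - Int.fract (x + j * α - a) := by linarith
  rw [h5] at this
  have h6 : |Int.fract (x + j' * α - a) - Int.fract (x + j * α - a)| < δ := by
    rw [abs_lt]; constructor <;> linarith
  linarith

lemma deficit_count (α : ℝ) (F : ℝ → ℕ → ℝ) (Γ C D : ℝ) (n : ℕ) (P : ℝ → Prop)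
    (hn : 0 < n)
    (hsub : ∀ x j k, F x (j + k) ≤ F x j + F (x + j * α) k)
    (hup : ∀ x ℓ, F x ℓ ≤ Γ * ℓ + C)
    (hdef : ∀ x, P x → F x n ≤ Γ * n - D - C)
    (hsep : ∀ (x : ℝ) (j j' : ℕ), j < j' → P (x + j * α) → P (x + j' * α) → j + n < j')
    (x : ℝ) (ℓ : ℕ) :
    F x ℓ ≤ Γ * ℓ + C - D * (((Finset.range (ℓ + 1 - n)).filter
      fun j : ℕ => P (x + j * α)).card : ℝ) := by
  induction ℓ using Nat.strong_induction_on with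
  | _ ℓ ih =>
    set S := (Finset.range (ℓ + 1 - n)).filter fun j : ℕ => P (x + j * α) with hS
    rcases S.eq_empty_or_nonempty with he | hne
    · rw [he]; simpa using hup x ℓ
    · set j := S.max' hne with hj
      have hjS : j ∈ S := S.max'_mem hne
      have hjm : ∀ i ∈ S, i ≤ j := fun i hi => S.le_max' i hi
      clear_value j
      rw [hS, Finset.mem_filter, Finset.mem_range] at hjS
      obtain ⟨hjl, hjP⟩ := hjS
      have hSeq : S = insert j ((Finset.range (j + 1 - n)).filter fun i : ℕ => P (x + i * α)) := by
        ext i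
        rw [Finset.mem_insert, hS, Finset.mem_filter, Finset.mem_filter, Finset.mem_range,
          Finset.mem_range]
        constructor
        · rintro ⟨hi, hiP⟩
          have h1 := hjm i (by rw [hS, Finset.mem_filter, Finset.mem_range]; exact ⟨hi, hiP⟩)
          rcases h1.lt_or_eq with h | h
          · right
            have := hsep x i j h hiP hjP
            exact ⟨by omega, hiP⟩
          · left; exact h
        · rintro (h | ⟨hi, hiP⟩)
          · subst h; exact ⟨hjl, hjP⟩
          · exact ⟨by omega, hiP⟩
      have hcard : S.card = ((Finset.range (j + 1 - n)).filter fun i : ℕ => P (x + i * α)).card + 1 := by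
        rw [hSeq, Finset.card_insert_of_notMem]
        simp only [Finset.mem_filter, Finset.mem_range]
        omega
      have hind := ih j (by omega)
      obtain ⟨r, hr⟩ : ∃ r, ℓ = (j + n) + r := ⟨ℓ - (j + n), by omega⟩
      have h1 := hsub x (j + n) r
      have h2 := hsub x j n
      have h3 := hdef _ hjP
      have h4 := hup (x + ((j + n : ℕ) : ℝ) * α) r
      rw [hcard, hr]
      push_cast at *
      linarith

noncomputable abbrev L2Z := lp (fun _ : ℤ => ℂ) 2

lemma l2_hasSum (u : L2Z) : HasSum (fun n : ℤ => ‖u n‖ ^ 2) (‖u‖ ^ 2) := by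
  have := lp.hasSum_norm (p := 2) (by simp) u
  simpa using this

lemma hasSum_shift {β : Type*} [AddCommMonoid β] [TopologicalSpace β] {f : ℤ → β} {s : β}
    (h : HasSum f s) (c : ℤ) : HasSum (fun n => f (n + c)) s :=
  (Equiv.addRight c).hasSum_iff.2 h

noncomputable def shiftZ (u : L2Z) (c : ℤ) : L2Z :=
  ⟨fun n => u (n + c), by
    apply memℓp_gen
    have := (hasSum_shift (l2_hasSum u) c).summable
    simpa using this⟩

lemma shiftZ_apply (u : L2Z) (c n : ℤ) : shiftZ u c n = u (n + c) := rfl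

lemma H_selfAdjoint (lam : ℝ) (v : ℤ → ℝ) (H : L2Z →L[ℂ] L2Z)
    (hH : ∀ u : L2Z, ∀ n : ℤ,
      H u n = u (n + 1) + u (n - 1) + (lam * v n : ℝ) * u n) : IsSelfAdjoint H := by
  rw [ContinuousLinearMap.isSelfAdjoint_iff_isSymmetric]
  intro x y
  change inner ℂ (H x) y = inner ℂ x (H y)
  have h1 := lp.hasSum_inner (𝕜 := ℂ) (H x) y
  have ha := lp.hasSum_inner (𝕜 := ℂ) (shiftZ x 1) y
  have hb := lp.hasSum_inner (𝕜 := ℂ) (shiftZ x (-1)) y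
  have hc := (h1.sub ha).sub hb
  have ha' := hasSum_shift ha (-1)
  have hb' := hasSum_shift hb 1
  have h2 := (hc.add ha').add hb'
  have h3 := lp.hasSum_inner (𝕜 := ℂ) x (H y)
  have h4 := h2.unique (h3.congr_fun ?_)
  · rw [← h4]; ring
  · intro n
    simp only [shiftZ_apply, hH, RCLike.inner_apply, map_add, map_mul, Complex.conj_ofReal]
    simp only [← sub_eq_add_neg, add_sub_cancel_right, sub_add_cancel]
    ring

lemma approx_eig (lam : ℝ) (v : ℤ → ℝ) (H : L2Z →L[ℂ] L2Z)
    (hH : ∀ u : L2Z, ∀ n : ℤ,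
      H u n = u (n + 1) + u (n - 1) + (lam * v n : ℝ) * u n)
    (E : ℂ) (hE : E ∈ spectrum ℂ H) (d : ℝ) (hd : 0 < d) :
    ∃ u : L2Z, ‖H u - E • u‖ < d * ‖u‖ := by
  by_contra hc
  push Not at hc
  have hsa := H_selfAdjoint lam v H hH
  have hre := hsa.mem_spectrum_eq_re hE
  apply hE
  set K : L2Z →L[ℂ] L2Z := algebraMap ℂ _ E - H with hK
  have hKsa : IsSelfAdjoint K := by
    refine IsSelfAdjoint.sub ?_ hsa
    rw [hre]
    rw [isSelfAdjoint_iff, ← algebraMap_star_comm]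
    simp
  have hKn : ∀ u, d * ‖u‖ ≤ ‖K u‖ := by
    intro u
    have : K u = -(H u - E • u) := by
      simp [hK, Algebra.algebraMap_eq_smul_one]
    rw [this, norm_neg]
    exact hc u
  have hunit : IsUnit (K * K) := by
    refine ContinuousLinearMap.isUnit_of_forall_le_norm_inner_map (K * K)
      (c := ⟨d ^ 2, by positivity⟩) (by change (0 : ℝ) < d ^ 2; positivity) fun u => ?_
    have : inner ℂ ((K * K) u) u = inner ℂ (K u) (K u) := by
      have := (ContinuousLinearMap.isSelfAdjoint_iff_isSymmetric.1 hKsa) (K u) u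
      exact this
    rw [this, inner_self_eq_norm_sq_to_K]
    have h1 := hKn u
    have h2 : (d * ‖u‖) ^ 2 ≤ ‖K u‖ ^ 2 := by gcongr
    change ‖u‖ ^ 2 * d ^ 2 ≤ _
    rw [norm_pow]
    simp only [RCLike.norm_ofReal, abs_norm]
    nlinarith
  exact ((Commute.refl K).isUnit_mul_iff.1 hunit).1

noncomputable def pairU (ψ : ℤ → ℂ) (k : ℤ) : V2 := !₂[ψ k, ψ (k - 1)]

lemma pairU_norm_sq (ψ : ℤ → ℂ) (k : ℤ) : ‖pairU ψ k‖ ^ 2 = ‖ψ k‖ ^ 2 + ‖ψ (k - 1)‖ ^ 2 := by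
  rw [V2_norm_sq]; simp [pairU]

lemma localized (lam : ℝ) (v : ℤ → ℝ) (H : L2Z →L[ℂ] L2Z)
    (hH : ∀ u : L2Z, ∀ n : ℤ,
      H u n = u (n + 1) + u (n - 1) + (lam * v n : ℝ) * u n)
    (E : ℂ) (hE : E ∈ spectrum ℂ H) (n1 n2 : ℕ) (ρ : ℝ) (hρ : 0 < ρ) :
    ∃ (ψ : ℤ → ℂ) (m : ℤ), 0 < ‖pairU ψ m‖ ∧ ‖pairU ψ (m + n2)‖ ≤ 2 * ‖pairU ψ m‖ ∧
      ‖pairU ψ (m - n1)‖ ≤ 2 * ‖pairU ψ m‖ ∧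
      ∀ i : ℕ, i < n1 + n2 → ‖ψ (m - n1 + i + 1) + ψ (m - n1 + i - 1)
        + (lam * v (m - n1 + i) : ℝ) * ψ (m - n1 + i) - E * ψ (m - n1 + i)‖ ≤ ρ * ‖pairU ψ m‖ := by
  set n := n1 + n2 with hn
  set K : ℝ := 4 / ρ ^ 2 with hK
  have hK0 : 0 < K := by positivity
  set X : ℝ := K * n with hX
  have hX0 : 0 ≤ X := by positivity
  set d : ℝ := 1 / (1 + X) with hd
  have hd0 : 0 < d := by positivity
  have hdX : X * d ^ 2 ≤ 1 := by
    have h1 : d * (1 + X) = 1 := by rw [hd]; field_simp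
    nlinarith
  obtain ⟨u, hu⟩ := approx_eig lam v H hH E hE d hd0
  set φ : L2Z := H u - E • u with hφ
  have hφa : ∀ k, φ k = u (k + 1) + u (k - 1) + (lam * v k : ℝ) * u k - E * u k := by
    intro k
    have : φ k = H u k - E * u k := rfl
    rw [this, hH]
  have hu0 : 0 < ‖u‖ := by
    by_contra hc
    have : ‖u‖ = 0 := le_antisymm (not_lt.1 hc) (norm_nonneg _)
    rw [this, mul_zero] at hu
    exact absurd hu (not_lt.2 (norm_nonneg _))
  have hφn : ‖φ‖ ^ 2 ≤ d ^ 2 * ‖u‖ ^ 2 := by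
    rw [← mul_pow]; gcongr
  have hsU : HasSum (fun m => ‖pairU u m‖ ^ 2) (‖u‖ ^ 2 + ‖u‖ ^ 2) := by
    simp only [pairU_norm_sq]
    exact (l2_hasSum u).add (hasSum_shift (l2_hasSum u) (-1))
  have hgood : ∃ m : ℤ, 0 < ‖pairU u m‖ ∧
      ‖pairU u (m + n2)‖ ^ 2 + ‖pairU u (m - n1)‖ ^ 2
        + K * ∑ i ∈ Finset.range n, ‖φ (m - n1 + i)‖ ^ 2 ≤ 3 * ‖pairU u m‖ ^ 2 := by
    by_contra hc
    push Not at hc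
    have hall : ∀ m : ℤ, 3 * ‖pairU u m‖ ^ 2 ≤ ‖pairU u (m + n2)‖ ^ 2 + ‖pairU u (m - n1)‖ ^ 2
        + K * ∑ i ∈ Finset.range n, ‖φ (m - n1 + i)‖ ^ 2 := by
      intro m
      rcases (norm_nonneg (pairU u m)).eq_or_lt with h | h
      · rw [← h]
        have : 0 ≤ ∑ i ∈ Finset.range n, ‖φ (m - n1 + i)‖ ^ 2 :=
          Finset.sum_nonneg fun i _ => by positivity
        have : 0 ≤ K * ∑ i ∈ Finset.range n, ‖φ (m - n1 + i)‖ ^ 2 := by positivity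
        nlinarith [sq_nonneg ‖pairU u (m + n2)‖, sq_nonneg ‖pairU u (m - n1)‖]
      · exact (hc m h).le
    have s1 := hasSum_shift hsU n2
    have s2 := hasSum_shift hsU (-n1)
    have s3 : HasSum (fun m : ℤ => ∑ i ∈ Finset.range n, ‖φ (m - n1 + i)‖ ^ 2)
        (∑ i ∈ Finset.range n, ‖φ‖ ^ 2) := by
      apply hasSum_sum
      intro i _
      have := hasSum_shift (l2_hasSum φ) (-n1 + i)
      simpa [← add_assoc, ← sub_eq_add_neg] using this
    have hfin := hasSum_le hall (hsU.mul_left 3) ((s1.add s2).add (s3.mul_left K))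
    rw [Finset.sum_const, Finset.card_range, nsmul_eq_mul] at hfin
    have : K * (n * ‖φ‖ ^ 2) ≤ ‖u‖ ^ 2 := by
      calc K * (n * ‖φ‖ ^ 2) = X * ‖φ‖ ^ 2 := by rw [hX]; ring
        _ ≤ X * (d ^ 2 * ‖u‖ ^ 2) := by gcongr
        _ = (X * d ^ 2) * ‖u‖ ^ 2 := by ring
        _ ≤ 1 * ‖u‖ ^ 2 := by gcongr
        _ = _ := one_mul _
    have : 0 < ‖u‖ ^ 2 := by positivity
    linarith
  obtain ⟨m, hm0, hm⟩ := hgood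
  have hS0 : 0 ≤ ∑ i ∈ Finset.range n, ‖φ (m - n1 + i)‖ ^ 2 :=
    Finset.sum_nonneg fun i _ => by positivity
  have hS1 : 0 ≤ K * ∑ i ∈ Finset.range n, ‖φ (m - n1 + i)‖ ^ 2 := by positivity
  have q1 : 0 ≤ ‖pairU u (m + n2)‖ ^ 2 := by positivity
  have q2 : 0 ≤ ‖pairU u (m - n1)‖ ^ 2 := by positivity
  refine ⟨u, m, hm0, ?_, ?_, ?_⟩
  · apply abs_le_of_sq_le_sq' _ (by positivity) |>.2
    nlinarith
  · apply abs_le_of_sq_le_sq' _ (by positivity) |>.2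
    nlinarith
  · intro i hi
    rw [← hφa]
    apply abs_le_of_sq_le_sq' _ (by positivity) |>.2
    have h1 : ‖φ (m - n1 + i)‖ ^ 2 ≤ ∑ i ∈ Finset.range n, ‖φ (m - n1 + i)‖ ^ 2 :=
      Finset.single_le_sum (f := fun i : ℕ => ‖φ (m - n1 + i)‖ ^ 2)
        (fun i _ => by positivity) (Finset.mem_range.2 hi)
    have h2 : K * ‖φ (m - n1 + i)‖ ^ 2 ≤ 4 * ‖pairU u m‖ ^ 2 := by nlinarith
    have h3 : K * ρ ^ 2 = 4 := by rw [hK]; field_simp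
    have h4 : K * ‖φ (m - n1 + i)‖ ^ 2 ≤ K * (ρ * ‖pairU u m‖) ^ 2 := by
      rw [mul_pow, ← mul_assoc, h3]; exact h2
    exact le_of_mul_le_mul_left h4 hK0

noncomputable def cocA (lam : ℝ) (E : ℂ) (α x : ℝ) (n : ℕ) : Matrix (Fin 2) (Fin 2) ℂ :=
  transferM lam E (sturmW α x n)

lemma cocA_add (lam : ℝ) (E : ℂ) (α x : ℝ) (j k : ℕ) :
    cocA lam E α x (j + k) = cocA lam E α (x + j * α) k * cocA lam E α x j := by
  unfold cocA
  rw [sturmW_add, transferM_append]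

lemma cocA_succ (lam : ℝ) (E : ℂ) (α x : ℝ) (j : ℕ) :
    cocA lam E α x (j + 1) = transferT lam E (sturmF α (x + j * α)) * cocA lam E α x j := by
  rw [cocA_add]
  congr 1
  simp [cocA, sturmW, transferM]

noncomputable def bndB (lam : ℝ) (E : ℂ) : ℝ := 1 + opNorm (transferT lam E 0) + opNorm (transferT lam E 1)

lemma one_le_bndB (lam : ℝ) (E : ℂ) : 1 ≤ bndB lam E := by
  unfold bndB
  linarith [opNorm_nonneg (transferT lam E 0), opNorm_nonneg (transferT lam E 1)]

lemma T_le_bndB (lam : ℝ) (E : ℂ) (α x : ℝ) : opNorm (transferT lam E (sturmF α x)) ≤ bndB lam E := by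
  have h0 := opNorm_nonneg (transferT lam E 0)
  have h1 := opNorm_nonneg (transferT lam E 1)
  unfold bndB sturmF
  split_ifs <;> linarith

lemma cocA_le (lam : ℝ) (E : ℂ) (α x : ℝ) (n : ℕ) :
    opNorm (cocA lam E α x n) ≤ bndB lam E ^ n := by
  have hB := one_le_bndB lam E
  induction n with
  | zero =>
    refine ContinuousLinearMap.opNorm_le_bound _ (by simp) fun y => ?_
    simp [cocA, sturmW, transferM]
  | succ n ih =>
    rw [cocA_succ, pow_succ']
    refine (opNorm_mul_le _ _).trans ?_
    have := opNorm_nonneg (cocA lam E α x n)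
    have := T_le_bndB lam E α (x + n * α)
    gcongr

lemma propagate (lam : ℝ) (E : ℂ) (α θ : ℝ) (ψ : ℤ → ℂ) (k0 : ℤ) (ρ : ℝ) (hρ : 0 ≤ ρ) (j : ℕ)
    (h : ∀ i : ℕ, i < j → ‖ψ (k0 + i + 1) + ψ (k0 + i - 1)
        + (lam * sturmian α θ (k0 + i) : ℝ) * ψ (k0 + i) - E * ψ (k0 + i)‖ ≤ ρ) :
    ‖pairU ψ (k0 + j) - act (cocA lam E α (θ + k0 * α) j) (pairU ψ k0)‖
      ≤ j * bndB lam E ^ j * ρ := by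
  have hB := one_le_bndB lam E
  induction j with
  | zero => simp [cocA, sturmW, transferM, act]
  | succ j ih =>
    have ih' := ih fun i hi => h i (by omega)
    have hj := h j (by omega)
    rw [cocA_succ, act_mul]
    set Y := act (cocA lam E α (θ + k0 * α) j) (pairU ψ k0) with hY
    set T := transferT lam E (sturmF α (θ + k0 * α + j * α)) with hT
    set c := ψ (k0 + j + 1) + ψ (k0 + j - 1)
        + (lam * sturmian α θ (k0 + j) : ℝ) * ψ (k0 + j) - E * ψ (k0 + j) with hc
    have hst : sturmian α θ (k0 + j) = sturmF α (θ + k0 * α + j * α) := by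
      have : ((k0 + j : ℤ) : ℝ) * α + θ = θ + k0 * α + j * α := by push_cast; ring
      unfold sturmian sturmF
      rw [this]
    have hstep : pairU ψ (k0 + (j + 1 : ℕ)) = act T (pairU ψ (k0 + j)) + EuclideanSpace.single 0 c := by
      ext i
      fin_cases i
      · simp only [Fin.zero_eta, PiLp.add_apply, act_zero]
        simp [pairU, hT, transferT, hc, hst, ← add_assoc]
        ring
      · simp only [Fin.mk_one, PiLp.add_apply, act_one]
        simp [pairU, hT, transferT]
        congr 1
        ring
    have : pairU ψ (k0 + (j + 1 : ℕ)) - act T Y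
        = act T (pairU ψ (k0 + j) - Y) + EuclideanSpace.single 0 c := by
      rw [hstep, act_sub]; abel
    rw [this]
    refine (norm_add_le _ _).trans ?_
    have h1 := act_le T (pairU ψ (k0 + j) - Y)
    have h2 : opNorm T ≤ bndB lam E := T_le_bndB _ _ _ _
    have h3 : ‖(EuclideanSpace.single 0 c : V2)‖ ≤ ρ := by simpa using hj
    have h4 : opNorm T * ‖pairU ψ (k0 + j) - Y‖ ≤ bndB lam E * (j * bndB lam E ^ j * ρ) := by
      gcongr
    have h5 : ρ ≤ bndB lam E ^ (j + 1) * ρ :=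
      le_mul_of_one_le_left hρ (one_le_pow₀ hB)
    push_cast
    rw [pow_succ] at *
    nlinarith

lemma deficient_word (lam : ℝ) (α θ : ℝ) (H : L2Z →L[ℂ] L2Z)
    (hH : ∀ u : L2Z, ∀ n : ℤ,
      H u n = u (n + 1) + u (n - 1) + (lam * sturmian α θ n : ℝ) * u n)
    (E : ℂ) (hE : E ∈ spectrum ℂ H) (n1 n2 : ℕ) :
    ∃ x : ℝ, opNorm (cocA lam E α x (n1 + n2)) ≤
      3 * (opNorm (cocA lam E α x n1) + opNorm (cocA lam E α (x + n1 * α) n2)) := by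
  have hB := one_le_bndB lam E
  set B := bndB lam E with hBdef
  set X : ℝ := n1 * B ^ n1 * B ^ n1 + n2 * B ^ n2 + 1 with hX
  have t1 : 0 ≤ n1 * B ^ n1 * B ^ n1 := by positivity
  have t2 : 0 ≤ n2 * B ^ n2 := by positivity
  have hX0 : 0 < X := by positivity
  set ρ : ℝ := 1 / X with hρ
  have hρ0 : 0 < ρ := by positivity
  have hρX : X * ρ = 1 := by rw [hρ]; field_simp
  obtain ⟨ψ, m, hm0, hm1, hm2, hm3⟩ := localized lam (sturmian α θ) H hH E hE n1 n2 ρ hρ0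
  set e := pairU ψ m with he
  refine ⟨θ + ((m - n1 : ℤ) : ℝ) * α, ?_⟩
  have hρe : 0 ≤ ρ * ‖e‖ := by positivity
  have p1 := propagate lam E α θ ψ (m - n1) (ρ * ‖e‖) hρe n1
    (fun i hi => hm3 i (by omega))
  have p2 := propagate lam E α θ ψ m (ρ * ‖e‖) hρe n2 (fun i hi => by
    have := hm3 (n1 + i) (by omega)
    simpa only [Nat.cast_add, ← add_assoc, sub_add_cancel] using this)
  rw [sub_add_cancel, ← he] at p1
  rw [← he] at p2
  rw [cocA_add]
  have hx : θ + ((m - n1 : ℤ) : ℝ) * α + n1 * α = θ + m * α := by push_cast; ring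
  rw [hx]
  refine deficient _ _ (transferM_det _ _ _) e (pairU ψ (m - n1)) hm0 ?_ hm2 ?_
  · have h1 : act (cocA lam E α (θ + m * α) n2) e = pairU ψ (m + n2)
        - (pairU ψ (m + n2) - act (cocA lam E α (θ + m * α) n2) e) := by abel
    rw [h1]
    refine (norm_sub_le _ _).trans ?_
    have : n2 * B ^ n2 * (ρ * ‖e‖) ≤ ‖e‖ := by
      have : n2 * B ^ n2 * ρ ≤ 1 := by nlinarith
      nlinarith
    linarith
  · rw [norm_sub_rev]
    have h1 := cocA_le lam E α (θ + ((m - n1 : ℤ) : ℝ) * α) n1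
    rw [← hBdef] at h1 p1
    calc _ ≤ B ^ n1 * (n1 * B ^ n1 * (ρ * ‖e‖)) := by gcongr
      _ = (n1 * B ^ n1 * B ^ n1 * ρ) * ‖e‖ := by ring
      _ ≤ 1 * ‖e‖ := by
        gcongr
        nlinarith
      _ = ‖e‖ := one_mul _

noncomputable def logF (lam : ℝ) (E : ℂ) (α x : ℝ) (n : ℕ) : ℝ := Real.log (opNorm (cocA lam E α x n))

lemma one_le_cocA (lam : ℝ) (E : ℂ) (α x : ℝ) (n : ℕ) : 1 ≤ opNorm (cocA lam E α x n) :=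
  one_le_opNorm _ (transferM_det _ _ _)

lemma logF_nonneg (lam : ℝ) (E : ℂ) (α x : ℝ) (n : ℕ) : 0 ≤ logF lam E α x n :=
  Real.log_nonneg (one_le_cocA _ _ _ _ _)

lemma logF_le (lam : ℝ) (E : ℂ) (α x : ℝ) (n : ℕ) :
    logF lam E α x n ≤ n * Real.log (bndB lam E) := by
  rw [← Real.log_pow]
  exact Real.log_le_log (by linarith [one_le_cocA lam E α x n]) (cocA_le _ _ _ _ _)

lemma logF_sub (lam : ℝ) (E : ℂ) (α x : ℝ) (j k : ℕ) :
    logF lam E α x (j + k) ≤ logF lam E α x j + logF lam E α (x + j * α) k := by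
  have h1 := one_le_cocA lam E α x j
  have h2 := one_le_cocA lam E α (x + j * α) k
  have h3 := one_le_cocA lam E α x (j + k)
  unfold logF
  rw [← Real.log_mul (by positivity) (by positivity)]
  apply Real.log_le_log (by linarith)
  rw [cocA_add, mul_comm (opNorm (cocA lam E α x j))]
  exact opNorm_mul_le _ _

noncomputable def supG (lam : ℝ) (E : ℂ) (α : ℝ) (n : ℕ) : ℝ := ⨆ x : ℝ, logF lam E α x n

lemma logF_bdd (lam : ℝ) (E : ℂ) (α : ℝ) (n : ℕ) :
    BddAbove (Set.range fun x : ℝ => logF lam E α x n) :=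
  ⟨n * Real.log (bndB lam E), by rintro _ ⟨x, rfl⟩; exact logF_le _ _ _ _ _⟩

lemma logF_le_supG (lam : ℝ) (E : ℂ) (α x : ℝ) (n : ℕ) : logF lam E α x n ≤ supG lam E α n :=
  le_ciSup (logF_bdd lam E α n) x

lemma supG_subadd (lam : ℝ) (E : ℂ) (α : ℝ) : Subadditive (supG lam E α) := fun j k =>
  ciSup_le fun x => (logF_sub lam E α x j k).trans
    (add_le_add (logF_le_supG _ _ _ _ _) (logF_le_supG _ _ _ _ _))

lemma supG_nonneg (lam : ℝ) (E : ℂ) (α : ℝ) (n : ℕ) : 0 ≤ supG lam E α n :=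
  (logF_nonneg lam E α 0 n).trans (logF_le_supG _ _ _ _ _)

lemma supG_bddBelow (lam : ℝ) (E : ℂ) (α : ℝ) :
    BddBelow (Set.range fun n : ℕ => supG lam E α n / n) :=
  ⟨0, by rintro _ ⟨n, rfl⟩; exact div_nonneg (supG_nonneg _ _ _ _) (by positivity)⟩

lemma lim_nonpos (lam : ℝ) (α : ℝ) (hirr : Irrational α) (hα : α ∈ Set.Ioo (0 : ℝ) 1)
    (θ : ℝ) (H : L2Z →L[ℂ] L2Z)
    (hH : ∀ u : L2Z, ∀ n : ℤ,
      H u n = u (n + 1) + u (n - 1) + (lam * sturmian α θ n : ℝ) * u n)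
    (E : ℂ) (hE : E ∈ spectrum ℂ H) : (supG_subadd lam E α).lim ≤ 0 := by
  by_contra hc
  push Not at hc
  set γ := (supG_subadd lam E α).lim with hγ
  have htend := (supG_subadd lam E α).tendsto_lim (supG_bddBelow lam E α)
  rw [← hγ] at htend
  set Γ := γ + γ / 128 with hΓ
  obtain ⟨L0, hL0⟩ := Filter.eventually_atTop.1
    (htend.eventually (gt_mem_nhds (show γ < Γ by linarith)))
  have hlogB : 0 ≤ Real.log (bndB lam E) := Real.log_nonneg (one_le_bndB _ _)
  set C := (L0 : ℝ) * Real.log (bndB lam E) with hC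
  have hC0 : 0 ≤ C := by positivity
  have hup : ∀ x ℓ, logF lam E α x ℓ ≤ Γ * ℓ + C := by
    intro x ℓ
    rcases Nat.eq_zero_or_pos ℓ with h0 | hpos
    · have := logF_le lam E α x ℓ
      rw [h0] at this ⊢
      push_cast at *
      linarith
    rcases le_total L0 ℓ with h | h
    · have h1 := hL0 ℓ h
      rw [div_lt_iff₀ (by positivity)] at h1
      linarith [logF_le_supG lam E α x ℓ]
    · have h1 := logF_le lam E α x ℓ
      have h2 : (ℓ : ℝ) * Real.log (bndB lam E) ≤ C := by
        rw [hC]; gcongr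
      have : 0 ≤ Γ * ℓ := by positivity
      linarith
  -- choice of the scale
  obtain ⟨n0, hn0⟩ := exists_nat_ge (4 * (2 * γ + 2 * C + 5) / γ)
  obtain ⟨n, hn, δ, hδ0, hδ1, hnδ, hδ⟩ := dioph_B α hirr (n0 + 1)
  have hnlarge : 4 * (2 * γ + 2 * C + 5) ≤ n * γ := by
    rw [div_le_iff₀ hc] at hn0
    have : (n0 : ℝ) ≤ n := by exact_mod_cast (by omega : n0 ≤ n)
    nlinarith
  set D := Γ * n / 2 - Γ - 2 * C - 5 with hD
  have hDge : γ * n / 4 ≤ D := by nlinarith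
  obtain ⟨x0, hx0⟩ := deficient_word lam α θ H hH E hE (n / 2) (n - n / 2)
  rw [show n / 2 + (n - n / 2) = n by omega] at hx0
  have hF0 : logF lam E α x0 n ≤ Γ * n - D - C := by
    set Q := Γ * ((n : ℝ) / 2 + 1) + C with hQ
    have hexp : ∀ x (k : ℕ), (k : ℝ) ≤ (n : ℝ) / 2 + 1 → opNorm (cocA lam E α x k) ≤ Real.exp Q := by
      intro x k hk
      have h1 : opNorm (cocA lam E α x k) = Real.exp (logF lam E α x k) := by
        rw [logF, Real.exp_log (by linarith [one_le_cocA lam E α x k])]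
      rw [h1]
      apply Real.exp_le_exp.2
      refine (hup x k).trans ?_
      rw [hQ]
      gcongr
    have k1 : ((n / 2 : ℕ) : ℝ) ≤ (n : ℝ) / 2 + 1 := by
      have : 2 * (n / 2) ≤ n + 2 := by omega
      have h : (2 : ℝ) * ((n / 2 : ℕ) : ℝ) ≤ n + 2 := by exact_mod_cast this
      linarith
    have k2 : ((n - n / 2 : ℕ) : ℝ) ≤ (n : ℝ) / 2 + 1 := by
      have : 2 * (n - n / 2) ≤ n + 2 := by omega
      have h : (2 : ℝ) * ((n - n / 2 : ℕ) : ℝ) ≤ n + 2 := by exact_mod_cast this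
      linarith
    have h6 : opNorm (cocA lam E α x0 n) ≤ 6 * Real.exp Q := by
      have h1 := hexp x0 _ k1
      have h2 := hexp (x0 + (n / 2 : ℕ) * α) _ k2
      linarith
    have h7 : logF lam E α x0 n ≤ Real.log 6 + Q := by
      have := Real.log_le_log (by linarith [one_le_cocA lam E α x0 n]) h6
      rwa [Real.log_mul (by norm_num) (Real.exp_pos _).ne', Real.log_exp] at this
    have h8 : Real.log 6 ≤ 5 := by
      have := Real.log_le_sub_one_of_pos (show (0 : ℝ) < 6 by norm_num)
      linarith
    rw [hD]
    linarith
  obtain ⟨a, ha⟩ := word_interval α hα n δ hδ1 hδ x0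
  obtain ⟨L1, hL1⟩ := exists_nat_gt (n + 128 * C / γ)
  obtain ⟨ℓ, hℓ, hfreq⟩ := visit_freq α hirr δ a hδ0 hδ1 (L1 + 1)
  have hbound : ∀ x, logF lam E α x (ℓ + n) ≤ Γ * (ℓ + n) + C - γ * ℓ / 64 := by
    intro x
    have h1 := deficit_count α (logF lam E α) Γ C D n (fun x => Int.fract (x - a) < δ) (by omega)
      (fun x j k => logF_sub lam E α x j k) hup
      (fun x hx => by
        have : logF lam E α x n = logF lam E α x0 n := by
          unfold logF cocA; rw [ha x hx]
        rw [this]; exact hF0)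
      (fun x j j' hjj h1 h2 => visit_sep α n δ hδ a x j j' hjj h1 h2) x (ℓ + n)
    rw [show ℓ + n + 1 - n = ℓ + 1 by omega] at h1
    have h2 := hfreq x
    have h3 : (((Finset.range ℓ).filter fun j : ℕ => Int.fract (x + j * α - a) < δ).card : ℝ) ≤
        (((Finset.range (ℓ + 1)).filter fun j : ℕ => Int.fract (x + j * α - a) < δ).card : ℝ) := by
      exact_mod_cast Finset.card_le_card
        (Finset.filter_subset_filter _ (Finset.range_mono (Nat.le_succ ℓ)))
    have hD0 : 0 ≤ D := le_trans (by positivity) hDge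
    have h4 : D * (δ * ℓ / 4) ≤ D *
        (((Finset.range (ℓ + 1)).filter fun j : ℕ => Int.fract (x + j * α - a) < δ).card : ℝ) :=
      mul_le_mul_of_nonneg_left (h2.trans h3) hD0
    have h5 : γ * ℓ / 64 ≤ D * (δ * ℓ / 4) := by
      have e1 : γ / 16 ≤ D * δ := by nlinarith
      have e2 : (0 : ℝ) ≤ ℓ := by positivity
      nlinarith
    push_cast at h1
    linarith
  have hsup : supG lam E α (ℓ + n) ≤ Γ * (ℓ + n) + C - γ * ℓ / 64 := ciSup_le hbound
  have hlow := (supG_subadd lam E α).lim_le_div (supG_bddBelow lam E α)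
    (show ℓ + n ≠ 0 by omega)
  have hpos : (0 : ℝ) < ((ℓ + n : ℕ) : ℝ) := by exact_mod_cast (by omega : 0 < ℓ + n)
  rw [← hγ, le_div_iff₀ hpos] at hlow
  push_cast at hlow
  have hℓ' : (L1 : ℝ) ≤ ℓ := by exact_mod_cast (by omega : L1 ≤ ℓ)
  have hL1' : (n : ℝ) * γ + 128 * C < ℓ * γ := by
    have : (n : ℝ) + 128 * C / γ < ℓ := lt_of_lt_of_le hL1 hℓ'
    have h2 := mul_lt_mul_of_pos_right this hc
    rwa [add_mul, div_mul_cancel₀ _ hc.ne'] at h2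
  nlinarith

theorem lyapunov_uniformly_zero_on_Walpha
    (lam : ℝ) (hlam : lam ≠ 0) (α : ℝ) (hirr : Irrational α) (hα : α ∈ Set.Ioo (0 : ℝ) 1)
    (θ' : ℝ) (hθ' : θ' ∈ Set.Ico (0 : ℝ) 1)
    (H : lp (fun _ : ℤ => ℂ) 2 →L[ℂ] lp (fun _ : ℤ => ℂ) 2)
    (hH : (∀ u : lp (fun _ : ℤ => ℂ) 2, ∀ n : ℤ,
      H u n = u (n + 1) + u (n - 1) + (lam * sturmian α θ' n : ℝ) * u n))
    (E : ℂ) (hE : E ∈ spectrum ℂ H) :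
    ∀ ε > (0 : ℝ), ∃ N : ℕ, ∀ w ∈ Walpha α, N ≤ w.length →
      |(1 / w.length : ℝ) * Real.log (opNorm (transferM lam E w))| ≤ ε := by
  intro ε hε
  have hlim := lim_nonpos lam α hirr hα θ' H hH E hE
  have htend := (supG_subadd lam E α).tendsto_lim (supG_bddBelow lam E α)
  obtain ⟨N, hN⟩ := Filter.eventually_atTop.1
    (htend.eventually (gt_mem_nhds (show (supG_subadd lam E α).lim < ε by linarith)))
  refine ⟨N, ?_⟩
  rintro w ⟨θ, -, hw0, k, hw⟩ hlen
  have hwW : w = sturmW α (θ + k * α) w.length := by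
    conv_lhs => rw [hw]
    unfold sturmW
    simp only [List.pure_def, List.bind_eq_flatMap, ← List.map_eq_flatMap, List.map_map]
    apply List.map_congr_left
    intro i _
    simp only [Function.comp]
    unfold sturmian sturmF
    have : ((k + i : ℤ) : ℝ) * α + θ = θ + k * α + i * α := by push_cast; ring
    rw [this]
  have hval : Real.log (opNorm (transferM lam E w)) = logF lam E α (θ + k * α) w.length := by
    unfold logF cocA
    rw [← hwW]
  rw [hval]
  have h0 := logF_nonneg lam E α (θ + k * α) w.length
  have h1 := logF_le_supG lam E α (θ + k * α) w.length
  have h2 := hN _ hlen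
  rw [abs_of_nonneg (by positivity), one_div, inv_mul_eq_div]
  refine le_trans ?_ h2.le
  gcongr
end

section
/- Let α ∈ (0,1) be irrational with continued fraction expansion α = [a_1, a_2, …] and suppose there exists C ∈ ℝ with a_n ≤ C for all n ∈ ℕ. Then for every nonnegative subadditive function F : W_α → ℝ, the limit lim_{|w|→∞, w ∈ W_α} F(w)/|w| exists; that is, there is L ∈ ℝ such that for every ε > 0 there exists N ∈ ℕ with |F(w)/|w| − L| ≤ ε for all w ∈ W_α with |w| ≥ N. -/
open scoped Classical

lemma cfGauss_mem (α : ℝ) (hirr : Irrational α) (hα : α ∈ Set.Ioo (0 : ℝ) 1) (n : ℕ) :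
    Irrational (cfGauss α n) ∧ cfGauss α n ∈ Set.Ioo (0 : ℝ) 1 := by
  induction n with
  | zero => exact ⟨hirr, hα⟩
  | succ k ih =>
    have h1 : Irrational (cfGauss α k)⁻¹ := irrational_inv_iff.mpr ih.1
    have h2 : Irrational (cfGauss α (k + 1)) := by
      have : cfGauss α (k + 1) = (cfGauss α k)⁻¹ - (⌊(cfGauss α k)⁻¹⌋ : ℤ) := rfl
      rw [this]
      exact h1.sub_intCast _
    refine ⟨h2, lt_of_le_of_ne (Int.fract_nonneg _) ?_, Int.fract_lt_one _⟩
    intro h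
    exact h2.ne_zero h.symm

lemma cfCoeff_spec (α : ℝ) (hirr : Irrational α) (hα : α ∈ Set.Ioo (0 : ℝ) 1) (n : ℕ) :
    1 ≤ cfCoeff α (n + 1) ∧
      cfGauss α (n + 1) = (cfGauss α n)⁻¹ - (cfCoeff α (n + 1) : ℝ) := by
  obtain ⟨-, h0, h1⟩ := cfGauss_mem α hirr hα n
  have h2 : 1 ≤ (cfGauss α n)⁻¹ := (one_le_inv₀ h0).mpr h1.le
  have h3 : cfCoeff α (n + 1) = ⌊(cfGauss α n)⁻¹⌋₊ := rfl
  constructor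
  · rw [h3]
    exact (Nat.one_le_floor_iff _).mpr h2
  · rw [h3, natCast_floor_eq_intCast_floor (by linarith)]
    rfl

lemma cf_state (α : ℝ) (hirr : Irrational α) (hα : α ∈ Set.Ioo (0 : ℝ) 1)
    (C : ℝ) (hC : ∀ n : ℕ, 1 ≤ n → (cfCoeff α n : ℝ) ≤ C) (n : ℕ) :
    ∃ q q' p p' s : ℤ, ∃ d d' : ℝ, 1 ≤ q ∧ q ≤ q' ∧ (n : ℤ) + 1 ≤ q' ∧ s * s = 1 ∧
      (q' : ℝ) ≤ (C + 1) * q ∧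
      0 < d ∧ d' = cfGauss α (n + 1) * d ∧ s * (q * α - p) = d ∧ s * (p' - q' * α) = d' ∧
      q * p' - p * q' = s ∧
      ∀ m k : ℤ, 1 ≤ m → m < q' → 1 ≤ (C + 2) * m * |m * α - k| := by
  have hC1 : 1 ≤ C := by
    have := (cfCoeff_spec α hirr hα 0).1
    have h2 := hC 1 le_rfl
    have : (1 : ℝ) ≤ cfCoeff α 1 := by exact_mod_cast this
    linarith
  -- the key step
  have key : ∀ q q' p p' s : ℤ, ∀ d d' : ℝ, 1 ≤ q → q ≤ q' → s * s = 1 →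
      (q' : ℝ) ≤ (C + 1) * q → 0 < d → 0 < d' → d' < d → s * (q * α - p) = d →
      s * (p' - q' * α) = d' → q * p' - p * q' = s →
      ∀ m k : ℤ, q ≤ m → m < q' → 1 ≤ (C + 2) * m * |m * α - k| := by
    intro q q' p p' s d d' hq hqq hs hqC hd hd' hdd e1 e2 hdet m k hm hm'
    have hqR : (1 : ℝ) ≤ q := by exact_mod_cast hq
    have hmR : (q : ℝ) ≤ m := by exact_mod_cast hm
    have hsR : (s : ℝ) * s = 1 := by exact_mod_cast hs
    have hdR : (q : ℝ) * p' - p * q' = s := by exact_mod_cast hdet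
    have h1 : q * d' + q' * d = 1 := by
      rw [← e1, ← e2]
      linear_combination (s : ℝ) * hdR + hsR
    have h2 : 1 ≤ (C + 2) * q * d := by nlinarith
    -- coordinates
    obtain ⟨u, hu⟩ : ∃ u : ℤ, u = s * (m * p' - k * q') := ⟨_, rfl⟩
    obtain ⟨v, hv⟩ : ∃ v : ℤ, v = s * (q * k - p * m) := ⟨_, rfl⟩
    have hmuv : m = u * q + v * q' := by
      rw [hu, hv]; linear_combination (-m * s) * hdet - m * hs
    have hkuv : k = u * p + v * p' := by
      rw [hu, hv]; linear_combination (-k * s) * hdet - k * hs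
    have h3 : m * α - k = s * (u * d - v * d') := by
      have hm1 : (m : ℝ) = u * q + v * q' := by exact_mod_cast hmuv
      have hk1 : (k : ℝ) = u * p + v * p' := by exact_mod_cast hkuv
      rw [hm1, hk1, ← e1, ← e2]
      linear_combination (-(u * (q * α - p) - v * (p' - q' * α)) : ℝ) * hsR
    have h4 : d ≤ |m * α - k| := by
      have habs : |(s : ℝ)| = 1 := by
        rcases mul_self_eq_one_iff.mp hsR with h | h <;> simp [h]
      rw [h3, abs_mul, habs, one_mul]
      rcases lt_trichotomy v 0 with h | h | h
      · have hu1 : 1 ≤ u := by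
          by_contra hcon
          have : u ≤ 0 := by omega
          nlinarith
        have : (1 : ℝ) ≤ u := by exact_mod_cast hu1
        have hvR : (v : ℝ) < 0 := by exact_mod_cast h
        refine le_trans ?_ (le_abs_self _)
        nlinarith
      · have hu1 : 1 ≤ u := by
          by_contra hcon
          have : u ≤ 0 := by omega
          subst h
          nlinarith
        have : (1 : ℝ) ≤ u := by exact_mod_cast hu1
        refine le_trans ?_ (le_abs_self _)
        rw [h]; push_cast
        nlinarith
      · have hu1 : u ≤ -1 := by
          by_contra hcon
          have : 0 ≤ u := by omega
          nlinarith
        have : (u : ℝ) ≤ -1 := by exact_mod_cast hu1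
        have hvR : (0 : ℝ) < v := by exact_mod_cast h
        refine le_trans ?_ (neg_le_abs _)
        nlinarith
    calc (1 : ℝ) ≤ (C + 2) * q * d := h2
      _ ≤ (C + 2) * m * |m * α - k| := by
        apply mul_le_mul _ h4 hd.le
        · have : (0:ℝ) ≤ m := by linarith
          nlinarith
        · apply mul_le_mul_of_nonneg_left hmR; linarith
  induction n with
  | zero =>
    obtain ⟨ha, hg⟩ := cfCoeff_spec α hirr hα 0
    obtain ⟨-, g0, g1⟩ := cfGauss_mem α hirr hα 1
    have haC := hC 1 le_rfl
    have hα0 := hα.1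
    have e0 : cfGauss α 0 = α := rfl
    simp only [zero_add] at hg ha ⊢
    rw [e0] at hg
    have hd' : (1 : ℝ) - cfCoeff α 1 * α = cfGauss α 1 * α := by
      rw [hg]; field_simp
    have haZ : (1 : ℤ) ≤ (cfCoeff α 1 : ℤ) := by exact_mod_cast ha
    refine ⟨1, cfCoeff α 1, 0, 1, 1, α, cfGauss α 1 * α, le_rfl, haZ, by simpa using haZ,
      by norm_num, ?_, hα0, rfl, by simp, ?_, by norm_num, ?_⟩
    · push_cast; linarith
    · push_cast; linarith
    · intro m k hm hm'
      refine key 1 (cfCoeff α 1) 0 1 1 α (cfGauss α 1 * α) le_rfl haZ (by norm_num) ?_ hα0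
        (by positivity) (by nlinarith) (by simp) ?_ (by norm_num) m k hm hm'
      · push_cast; linarith
      · push_cast; linarith
  | succ n ih =>
    obtain ⟨q, q', p, p', s, d, d', hq, hqq, hn, hs, hqC, hd, hdd, e1, e2, hdet, hall⟩ := ih
    obtain ⟨ha, hg⟩ := cfCoeff_spec α hirr hα (n + 1)
    obtain ⟨-, g0, g1⟩ := cfGauss_mem α hirr hα (n + 1)
    obtain ⟨-, k0, k1⟩ := cfGauss_mem α hirr hα (n + 1 + 1)
    have haC := hC (n + 1 + 1) (by omega)
    set a := cfCoeff α (n + 1 + 1) with hadef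
    have haZ : (1 : ℤ) ≤ (a : ℤ) := by exact_mod_cast ha
    have hd' : 0 < d' := by rw [hdd]; positivity
    have hdeq : d = (cfGauss α (n + 1))⁻¹ * d' := by rw [hdd]; field_simp
    have f1 : q' ≤ a * q' + q := by nlinarith
    have hqqR : (q : ℝ) ≤ q' := by exact_mod_cast hqq
    have hqR : (1 : ℝ) ≤ q := by exact_mod_cast hq
    have f2 : ((a * q' + q : ℤ) : ℝ) ≤ (C + 1) * q' := by
      push_cast; nlinarith
    have f3 : (((-s : ℤ)) : ℝ) * (q' * α - p') = d' := by push_cast; linarith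
    have f4 : (((-s : ℤ)) : ℝ) * ((a * p' + p : ℤ) - (a * q' + q : ℤ) * α)
        = cfGauss α (n + 1 + 1) * d' := by
      rw [hg]; push_cast
      linear_combination e1 - (a : ℝ) * e2 + hdeq
    have f5 : q' * (a * p' + p) - p' * (a * q' + q) = -s := by linear_combination -hdet
    refine ⟨q', a * q' + q, p', a * p' + p, -s, d', cfGauss α (n + 1 + 1) * d',
      by omega, f1, ?_, by linarith, f2, hd', rfl, f3, f4, f5, ?_⟩
    · push_cast; nlinarith
    · intro m k hm hm'
      rcases lt_or_ge m q' with h | h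
      · exact hall m k hm h
      · exact key q' (a * q' + q) p' (a * p' + p) (-s) d' (cfGauss α (n + 1 + 1) * d')
          (by omega) f1 (by linarith) f2 hd' (by positivity) (by nlinarith) f3 f4 f5 m k h hm'

lemma badly_approx (α : ℝ) (hirr : Irrational α) (hα : α ∈ Set.Ioo (0 : ℝ) 1)
    (C : ℝ) (hC : ∀ n : ℕ, 1 ≤ n → (cfCoeff α n : ℝ) ≤ C) :
    ∃ c : ℝ, 0 < c ∧ ∀ m k : ℤ, 1 ≤ m → c / m ≤ |m * α - k| := by
  have hC0 : 0 ≤ C := le_trans (Nat.cast_nonneg _) (hC 1 le_rfl)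
  refine ⟨1 / (C + 2), by positivity, ?_⟩
  intro m k hm
  obtain ⟨q, q', p, p', s, d, d', hq, hqq, hn, hs, hqC, hd, hdd, e1, e2, hdet, hall⟩ :=
    cf_state α hirr hα C hC m.toNat
  have := hall m k hm (by omega)
  have hmR : (1 : ℝ) ≤ m := by exact_mod_cast hm
  rw [div_div, div_le_iff₀ (by positivity)]
  linarith

/-- Orbits hit intervals of length `l` in time linear in `1/l`. -/
lemma hitting (α : ℝ) (c : ℝ) (hc : 0 < c)
    (hb : ∀ m k : ℤ, 1 ≤ m → c / m ≤ |m * α - k|)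
    (Q : ℕ) (hQ : 0 < Q) (x y : ℝ) :
    ∃ i : ℕ, i < Q ∧ ∃ t : ℤ, x ≤ y + i * α - t ∧ y + i * α - t < x + (1 / c + 2) / (Q + 1) := by
  obtain ⟨r, hr1, hr2⟩ := Real.exists_rat_abs_sub_le_and_den_le α hQ
  have hd0 : 0 < r.den := r.pos
  have hdR : (0 : ℝ) < r.den := by exact_mod_cast hd0
  have hQR : (0 : ℝ) < (Q : ℝ) + 1 := by positivity
  have hrval : (r : ℝ) = (r.num : ℝ) / r.den := by exact_mod_cast (Rat.cast_def (K := ℝ) r)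
  have hA : |α - r| * r.den ≤ 1 / (Q + 1) := by
    calc |α - r| * r.den ≤ 1 / ((Q + 1) * r.den) * r.den := by gcongr
      _ = 1 / (Q + 1) := by field_simp
  have hB : c / r.den ≤ |α - r| * r.den := by
    have := hb r.den r.num (by exact_mod_cast hd0)
    push_cast at this
    have e : |(r.den : ℝ) * α - r.num| = |α - r| * r.den := by
      rw [← abs_of_pos hdR, ← abs_mul, abs_of_pos hdR, hrval]
      congr 1; field_simp
    linarith
  have hden : 1 / (r.den : ℝ) ≤ 1 / c / (Q + 1) := by
    have := hB.trans hA
    calc 1 / (r.den : ℝ) = (c / r.den) / c := by field_simp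
      _ ≤ (1 / (Q + 1)) / c := by gcongr
      _ = _ := by field_simp
  set T : ℤ := ⌈(r.den : ℝ) * (x - y + 1 / (Q + 1))⌉ with hT
  have hT1 := Int.le_ceil ((r.den : ℝ) * (x - y + 1 / (Q + 1)))
  have hT2 := Int.ceil_lt_add_one ((r.den : ℝ) * (x - y + 1 / (Q + 1)))
  rw [← hT] at hT1 hT2
  -- solve i * num ≡ T mod den
  have hcop : IsCoprime r.num (r.den : ℤ) := by
    rw [Int.isCoprime_iff_nat_coprime]; simpa using r.reduced
  obtain ⟨u, v, huv⟩ := hcop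
  have hdZ : (0 : ℤ) < r.den := by exact_mod_cast hd0
  have hi0 := Int.emod_nonneg (T * u) hdZ.ne'
  have hi1 := Int.emod_lt_of_pos (T * u) hdZ
  have hi2 := Int.emod_add_mul_ediv (T * u) r.den
  set I := (T * u) % (r.den : ℤ) with hI
  set J := (T * u) / (r.den : ℤ) with hJ
  obtain ⟨i, hi⟩ := Int.eq_ofNat_of_zero_le hi0
  have hiden : i < r.den := by omega
  obtain ⟨t, ht⟩ : ∃ t : ℤ, t = -(T * v) - J * r.num := ⟨_, rfl⟩
  have hit : I * r.num = T + t * r.den := by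
    rw [ht]; linear_combination r.num * hi2 + T * huv
  have hitR : (i : ℝ) * r.num = T + t * r.den := by
    rw [hi] at hit; exact_mod_cast hit
  refine ⟨i, by omega, t, ?_⟩
  have hir : (i : ℝ) * r = T / r.den + t := by
    rw [hrval]; field_simp; linarith
  have herr : |(i : ℝ) * (α - r)| ≤ 1 / (Q + 1) := by
    rw [abs_mul, abs_of_nonneg (Nat.cast_nonneg i)]
    refine le_trans ?_ hA
    rw [mul_comm]
    have : (i : ℝ) ≤ r.den := by exact_mod_cast hiden.le
    gcongr
  rw [abs_le] at herr
  have hexp : y + i * α - t = y + T / r.den + i * (α - r) := by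
    linear_combination hir
  have hTd1 : x - y + 1 / (Q + 1) ≤ T / r.den := by
    rw [le_div_iff₀ hdR]; linarith
  have hTd2 : T / r.den < x - y + 1 / (Q + 1) + 1 / r.den := by
    rw [div_lt_iff₀ hdR, add_mul, one_div_mul_cancel hdR.ne']; linarith
  have hsplit : (1 / c + 2) / ((Q : ℝ) + 1) = 1 / c / (Q + 1) + 1 / (Q + 1) + 1 / (Q + 1) := by
    ring
  rw [hexp, hsplit]
  constructor <;> linarith [herr.1, herr.2]

lemma cell (α : ℝ) (c : ℝ) (hc : 0 < c) (hc1 : c ≤ 1)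
    (hb : ∀ m k : ℤ, 1 ≤ m → c / m ≤ |m * α - k|)
    (n : ℕ) (hn : 1 ≤ n) (x : ℝ) :
    ∃ p : ℝ, ∀ y, p ≤ y → y < p + c / n →
      ∀ i : ℕ, i ≤ n → ⌊i * α + y⌋ = ⌊i * α + x⌋ := by
  obtain ⟨i, hi, himin⟩ := Finset.exists_min_image (Finset.range (n + 1))
    (fun i : ℕ => Int.fract (i * α + x)) ⟨0, by simp⟩
  obtain ⟨j, hj, hjmax⟩ := Finset.exists_max_image (Finset.range (n + 1))
    (fun i : ℕ => Int.fract (i * α + x)) ⟨0, by simp⟩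
  have hnR : (1 : ℝ) ≤ n := by exact_mod_cast hn
  simp only [Finset.mem_range] at hi hj himin hjmax
  have hlen : c / n ≤ Int.fract (i * α + x) + 1 - Int.fract (j * α + x) := by
    have hpos : 0 < Int.fract (i * α + x) + 1 - Int.fract (j * α + x) := by
      linarith [Int.fract_nonneg (i * α + x), Int.fract_lt_one (j * α + x)]
    have hcn : c / n ≤ 1 := by
      rw [div_le_one (by linarith)]; linarith
    have gen : ∀ a b : ℕ, a < b → b ≤ n → ∀ z : ℤ, c / n ≤ |((b : ℝ) - a) * α - z| := by
      intro a b hab hbn z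
      have h := hb ((b : ℤ) - a) z (by omega)
      push_cast at h
      have h1 : (0 : ℝ) < (b : ℝ) - a := by
        have : (a : ℝ) < b := by exact_mod_cast hab
        linarith
      have h2 : (b : ℝ) - a ≤ n := by
        have : (b : ℝ) ≤ n := by exact_mod_cast hbn
        linarith [(Nat.cast_nonneg a : (0 : ℝ) ≤ a)]
      refine le_trans ?_ h
      gcongr
    rw [← abs_of_pos hpos]
    rcases lt_trichotomy i j with h | h | h
    · have := gen i j h (by omega) (⌊j * α + x⌋ - ⌊i * α + x⌋ + 1)
      rw [abs_sub_comm] at this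
      convert this using 2
      simp only [Int.fract]; push_cast; ring
    · rw [h]; simpa using hcn
    · have := gen j i h (by omega) (⌊i * α + x⌋ - ⌊j * α + x⌋ - 1)
      convert this using 2
      simp only [Int.fract]; push_cast; ring
  refine ⟨x - Int.fract (i * α + x), ?_⟩
  intro y hy1 hy2 l hl
  have h1 := himin l (by omega)
  have h2 := hjmax l (by omega)
  have h3 := Int.floor_add_fract (l * α + x)
  rw [Int.floor_eq_iff]
  constructor <;> linarith

/-- The factor of length `n` starting at phase `x`. -/
noncomputable def wordAt (α x : ℝ) (n : ℕ) : List ℝ :=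
  (List.range n).map fun i : ℕ => sturmian α x (i : ℤ)

lemma bind_cast_map (n : ℕ) (f : ℤ → ℝ) :
    List.map f ((List.range n) >>= fun a : ℕ => pure (a : ℤ)) =
      (List.range n).map fun i : ℕ => f (i : ℤ) := by
  generalize List.range n = l
  induction l with
  | nil => rfl
  | cons a l ih => exact congrArg (List.cons (f a)) ih

lemma wordAt_length (α x : ℝ) (n : ℕ) : (wordAt α x n).length = n := by simp [wordAt]

lemma sturmian_shift (α x : ℝ) (k i : ℤ) : sturmian α x (k + i) = sturmian α (k * α + x) i := by
  unfold sturmian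
  have : ((k + i : ℤ) : ℝ) * α + x = i * α + (k * α + x) := by push_cast; ring
  rw [this]

lemma sturmian_int (α x : ℝ) (t i : ℤ) : sturmian α (x - t) i = sturmian α x i := by
  unfold sturmian
  have : (i : ℝ) * α + (x - t) = i * α + x - t := by ring
  rw [this, Int.fract_sub_intCast]

lemma wordAt_int (α x : ℝ) (t : ℤ) (n : ℕ) : wordAt α (x - t) n = wordAt α x n := by
  simp only [wordAt, sturmian_int]

lemma wordAt_mem (α x : ℝ) (n : ℕ) (hn : n ≠ 0) : wordAt α x n ∈ Walpha α := by
  refine ⟨Int.fract x, ⟨Int.fract_nonneg _, Int.fract_lt_one _⟩, ?_, 0, ?_⟩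
  · intro h
    have := congrArg List.length h
    rw [wordAt_length] at this
    exact hn this
  · rw [wordAt_length, ← wordAt_int α x ⌊x⌋]
    rw [Int.self_sub_floor]
    rw [bind_cast_map]
    simp [wordAt]

lemma exists_wordAt (α : ℝ) (w : List ℝ) (hw : w ∈ Walpha α) :
    w.length ≠ 0 ∧ ∃ x, w = wordAt α x w.length := by
  obtain ⟨θ, -, h0, k, hk⟩ := hw
  refine ⟨by simpa using h0, k * α + θ, ?_⟩
  simp only [sturmian_shift] at hk
  exact hk.trans (bind_cast_map _ _)

lemma wordAt_add (α x : ℝ) (m n : ℕ) :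
    wordAt α x (m + n) = wordAt α x m ++ wordAt α (x + m * α) n := by
  unfold wordAt
  rw [List.range_add, List.map_append, List.map_map]
  congr 1
  apply List.map_congr_left
  intro i _
  have := sturmian_shift α x m i
  push_cast at this
  simp only [Function.comp]
  push_cast
  rw [this, add_comm]

lemma wordAt_congr (α x y : ℝ) (n : ℕ)
    (h : ∀ i : ℕ, i ≤ n → ⌊i * α + y⌋ = ⌊i * α + x⌋) : wordAt α y n = wordAt α x n := by
  have key : ∀ (z : ℝ) (i : ℕ), Int.fract (((i : ℤ) : ℝ) * α + z) ∈ Set.Ico (1 - α) 1 ↔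
      ⌊i * α + z⌋ + 1 ≤ ⌊((i + 1 : ℕ) : ℝ) * α + z⌋ := by
    intro z i
    rw [Int.le_floor, Set.mem_Ico]
    have := Int.floor_add_fract (i * α + z)
    push_cast
    constructor
    · rintro ⟨h1, -⟩; linarith
    · intro h1
      exact ⟨by linarith, Int.fract_lt_one _⟩
  unfold wordAt
  apply List.map_congr_left
  intro i hi
  rw [List.mem_range] at hi
  unfold sturmian
  have : Int.fract (((i : ℤ) : ℝ) * α + y) ∈ Set.Ico (1 - α) 1 ↔
      Int.fract (((i : ℤ) : ℝ) * α + x) ∈ Set.Ico (1 - α) 1 := by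
    rw [key, key, h i hi.le, h (i + 1) hi]
  simp only [this]

lemma linear_rep (α : ℝ) (hirr : Irrational α) (hα : α ∈ Set.Ioo (0 : ℝ) 1)
    (C : ℝ) (hC : ∀ n : ℕ, 1 ≤ n → (cfCoeff α n : ℝ) ≤ C) :
    ∃ K : ℕ, 1 ≤ K ∧ ∀ n : ℕ, 1 ≤ n → ∀ x y : ℝ, ∃ i r : ℕ, i + n + r = K * n ∧
      wordAt α (y + i * α) n = wordAt α x n := by
  obtain ⟨c₀, hc₀, hb₀⟩ := badly_approx α hirr hα C hC
  obtain ⟨c, hc, hc1, hcc⟩ : ∃ c : ℝ, 0 < c ∧ c ≤ 1 ∧ c ≤ c₀ :=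
    ⟨min c₀ 1, by positivity, min_le_right _ _, min_le_left _ _⟩
  have hb : ∀ m k : ℤ, 1 ≤ m → c / m ≤ |m * α - k| := by
    intro m k hm
    have hmR : (1 : ℝ) ≤ m := by exact_mod_cast hm
    refine le_trans ?_ (hb₀ m k hm)
    gcongr
  obtain ⟨K₀, hK₀⟩ := exists_nat_ge ((1 / c + 2) / c)
  have hK₀pos : 0 < K₀ := by
    have : (0 : ℝ) < K₀ := lt_of_lt_of_le (by positivity) hK₀
    exact_mod_cast this
  refine ⟨K₀ + 1, by omega, ?_⟩
  intro n hn x y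
  obtain ⟨p, hp⟩ := cell α c hc hc1 hb n hn x
  obtain ⟨i, hi, t, ht1, ht2⟩ := hitting α c hc hb (K₀ * n) (Nat.mul_pos hK₀pos hn) p y
  have hnR : (1 : ℝ) ≤ n := by exact_mod_cast hn
  have hle : (1 / c + 2) / (((K₀ * n : ℕ) : ℝ) + 1) ≤ c / n := by
    rw [div_le_iff₀ hc] at hK₀
    rw [div_le_div_iff₀ (by positivity) (by linarith)]
    push_cast
    nlinarith
  refine ⟨i, K₀ * n - i, ?_, ?_⟩
  · have : (K₀ + 1) * n = K₀ * n + n := by ring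
    omega
  · rw [← wordAt_int α (y + i * α) t]
    exact wordAt_congr α x _ n (hp _ ht1 (by linarith))

/-- Abstract form of the subadditive theorem. -/
lemma abstract_limit (α : ℝ) (G : ℝ → ℕ → ℝ) (D : ℝ) (hD : 0 ≤ D) (hG0 : ∀ x, G x 0 = 0)
    (hpos : ∀ x n, 0 ≤ G x n) (hG1 : ∀ x, G x 1 ≤ D)
    (hsub : ∀ x m n, G x (m + n) ≤ G x m + G (x + m * α) n)
    (K : ℕ) (hK : 1 ≤ K)
    (hrep : ∀ n : ℕ, 1 ≤ n → ∀ x y : ℝ, ∃ i r : ℕ, i + n + r = K * n ∧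
      G (y + i * α) n = G x n) :
    ∃ L : ℝ, ∀ ε > (0 : ℝ), ∃ N : ℕ, ∀ x n, N ≤ n → 1 ≤ n → |G x n / n - L| ≤ ε := by
  have hbd : ∀ n x, G x n ≤ D * n := by
    intro n
    induction n with
    | zero => intro x; simp [hG0]
    | succ k ih =>
      intro x
      have := hsub x k 1
      push_cast
      linarith [ih x, hG1 (x + k * α)]
  obtain ⟨M, hM⟩ : ∃ M : ℕ → ℝ, M = fun n => ⨆ x, G x n := ⟨_, rfl⟩
  have hbdd : ∀ n, BddAbove (Set.range fun x => G x n) := by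
    intro n
    refine ⟨D * n, ?_⟩
    rintro _ ⟨x, rfl⟩
    exact hbd n x
  have hGM : ∀ x n, G x n ≤ M n := by
    intro x n; rw [hM]; exact le_ciSup (hbdd n) x
  have hMle : ∀ n B, (∀ x, G x n ≤ B) → M n ≤ B := by
    intro n B h; rw [hM]; exact ciSup_le h
  have hMsub : Subadditive M := by
    intro m n
    apply hMle
    intro x
    linarith [hsub x m n, hGM x m, hGM (x + m * α) n]
  have hM0 : ∀ n, 0 ≤ M n := fun n => (hpos 0 n).trans (hGM 0 n)
  have hbelow : BddBelow (Set.range fun n : ℕ => M n / n) := by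
    refine ⟨0, ?_⟩
    rintro _ ⟨n, rfl⟩
    exact div_nonneg (hM0 n) (Nat.cast_nonneg n)
  have hlim := hMsub.tendsto_lim hbelow
  have hinf : ∀ n : ℕ, n ≠ 0 → hMsub.lim ≤ M n / n := fun n hn => hMsub.lim_le_div hbelow hn
  set L := hMsub.lim with hL
  have hL0 : 0 ≤ L := ge_of_tendsto' hlim fun n => div_nonneg (hM0 n) (Nat.cast_nonneg n)
  refine ⟨L, ?_⟩
  intro ε hε
  have hKR : (1 : ℝ) ≤ K := by exact_mod_cast hK
  obtain ⟨δ, hδ, hδK⟩ : ∃ δ : ℝ, 0 < δ ∧ δ * K = ε / 4 :=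
    ⟨ε / (4 * K), by positivity, by field_simp⟩
  have hev := hlim.eventually (gt_mem_nhds (show L < L + δ by linarith))
  obtain ⟨N₁, hN₁⟩ := Filter.eventually_atTop.mp hev
  obtain ⟨N₂, hN₂⟩ := exists_nat_gt (4 * (D * N₁) / ε)
  refine ⟨max N₁ N₂, ?_⟩
  intro x n hn hn1
  have hnR : (1 : ℝ) ≤ n := by exact_mod_cast hn1
  have hn0 : (0 : ℝ) < n := by linarith
  have hupper : ∀ z k, G z k ≤ (L + δ) * k + D * N₁ := by
    intro z k
    have hk0 : (0 : ℝ) ≤ k := Nat.cast_nonneg k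
    have hN0 : (0 : ℝ) ≤ N₁ := Nat.cast_nonneg _
    rcases lt_or_ge k N₁ with h | h
    · have h1 : (k : ℝ) ≤ N₁ := by exact_mod_cast h.le
      have := hbd k z
      nlinarith
    · rcases Nat.eq_zero_or_pos k with h0 | h0
      · subst h0; rw [hG0]; push_cast; nlinarith
      · have hk : (0 : ℝ) < k := by exact_mod_cast h0
        have h1 := hN₁ k h
        rw [div_lt_iff₀ hk] at h1
        nlinarith [hGM z k]
  have hδε : δ ≤ ε := by nlinarith
  rw [abs_le]
  constructor
  · by_contra hcon
    push Not at hcon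
    have hlow : G x n < (L - ε) * n := by
      rw [← div_lt_iff₀ hn0]; linarith
    have hMK : M (K * n) ≤ (L + δ) * (K * n - n) + 2 * (D * N₁) + (L - ε) * n := by
      apply hMle
      intro y
      obtain ⟨i, r, hir, hrw⟩ := hrep n hn1 x y
      have hirR : (i : ℝ) + n + r = K * n := by exact_mod_cast hir
      rw [← hir]
      have s1 := hsub y (i + n) r
      have s2 := hsub y i n
      have u1 := hupper y i
      have u2 := hupper (y + ((i + n : ℕ) : ℝ) * α) r
      have e : (K : ℝ) * n - n = i + r := by linarith
      rw [e]
      nlinarith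
    have hge := hinf (K * n) (by positivity)
    rw [le_div_iff₀ (by positivity)] at hge
    push_cast at hge
    have hN2n : (N₂ : ℝ) ≤ n := by exact_mod_cast (le_max_right _ _).trans hn
    have h5 : 4 * (D * N₁) < ε * n := by
      rw [div_lt_iff₀ hε] at hN₂
      nlinarith
    have h6 : δ * (K * n) = ε / 4 * n := by rw [← hδK]; ring
    have h7 : 0 < δ * n := by positivity
    nlinarith
  · have h1 := hN₁ n ((le_max_left _ _).trans hn)
    have h2 : G x n / n ≤ M n / n := by
      have := hGM x n
      gcongr
    linarith

theorem subadditive_limit_exists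
    (α : ℝ) (hirr : Irrational α) (hα : α ∈ Set.Ioo (0 : ℝ) 1)
    (C : ℝ) (hC : ∀ n : ℕ, 1 ≤ n → (cfCoeff α n : ℝ) ≤ C)
    (F : List ℝ → ℝ)
    (hnonneg : ∀ w ∈ Walpha α, 0 ≤ F w)
    (hsub : ∀ a b : List ℝ, a ∈ Walpha α → b ∈ Walpha α → a ++ b ∈ Walpha α →
      F (a ++ b) ≤ F a + F b) :
    ∃ L : ℝ, ∀ ε > (0 : ℝ), ∃ N : ℕ, ∀ w ∈ Walpha α, N ≤ w.length →
      |F w / w.length - L| ≤ ε := by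
  obtain ⟨K, hK, hrep⟩ := linear_rep α hirr hα C hC
  have hD : ∀ x, F (wordAt α x 1) ≤ |F [0]| + |F [1]| := by
    intro x
    have : wordAt α x 1 = [0] ∨ wordAt α x 1 = [1] := by
      simp only [wordAt, sturmian, List.range_one, List.map_cons, List.map_nil]
      split_ifs
      · right; rfl
      · left; rfl
    rcases this with h | h <;> rw [h]
    · linarith [le_abs_self (F [0]), abs_nonneg (F [1])]
    · linarith [le_abs_self (F [1]), abs_nonneg (F [0])]
  obtain ⟨L, hL⟩ := abstract_limit α (fun x n => if n = 0 then 0 else F (wordAt α x n))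
    (|F [0]| + |F [1]|) (by positivity) (by simp)
    (by
      intro x n
      split_ifs with h
      · exact le_rfl
      · exact hnonneg _ (wordAt_mem α x n h))
    (by intro x; simpa using hD x)
    (by
      intro x m n
      by_cases hm : m = 0
      · subst hm; simp
      · by_cases hn : n = 0
        · subst hn; simp
        · rw [if_neg (by omega), if_neg hm, if_neg hn]
          have h := wordAt_add α x m n
          rw [h]
          apply hsub _ _ (wordAt_mem α _ _ hm) (wordAt_mem α _ _ hn)
          rw [← h]
          exact wordAt_mem α _ _ (by omega))
    K hK
    (by
      intro n hn x y
      obtain ⟨i, r, h1, h2⟩ := hrep n hn x y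
      exact ⟨i, r, h1, by simp only [h2]⟩)
  refine ⟨L, fun ε hε => ?_⟩
  obtain ⟨N, hN⟩ := hL ε hε
  refine ⟨N, fun w hw hlen => ?_⟩
  obtain ⟨h0, x, hx⟩ := exists_wordAt α w hw
  have h := hN x w.length hlen (by omega)
  simp only [if_neg h0] at h
  rw [← hx] at h
  exact h
end

section
/- Let α ∈ (0,1) be irrational and let F : W_α → ℝ be a nonnegative subadditive function. Then for every n ≥ 1, limsup_{|w|→∞, w ∈ W_α} F(w)/|w| ≤ max{ F(s_n)/|s_n| , F(s_{n−1})/|s_{n−1}| }. Consequently limsup_{|w|→∞, w ∈ W_α} F(w)/|w| ≤ inf_{n≥1} max{ F(s_n)/|s_n| , F(s_{n−1})/|s_{n−1}| }. -/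
open scoped Classical

noncomputable section

/-- Open (generic) paths of the rotation by `β` coded by a word over `Bool`. -/
def OPath (β : ℝ) : ℝ → List Bool → Prop
  | _, [] => True
  | x, false :: u => 0 < x ∧ x < 1 - β ∧ OPath β (x + β) u
  | x, true :: u => 1 - β < x ∧ x < 1 ∧ OPath β (x + β - 1) u

/-- The desubstitution. -/
def sigmaW (a : ℕ) : Bool → List Bool
  | false => List.replicate (a - 1) false ++ [true]
  | true => [false]

/-- Blocks of level `n`. -/
def tauW (c : ℕ → ℕ) (n : ℕ) : Bool → List ℝ
  | false => sWord c (n + 1)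
  | true => sWord c n

theorem opath_zeros (β : ℝ) (hβ : 0 < β) : ∀ (m : ℕ) (x : ℝ) (u : List Bool), 0 < x →
    x + m * β < 1 → m ≤ u.length → OPath β x u →
    ∃ t, u = List.replicate m false ++ t ∧ OPath β (x + m * β) t := by
  intro m
  induction m with
  | zero => intro x u _ _ _ h; exact ⟨u, by simp, by simpa using h⟩
  | succ m ih =>
    intro x u hx hm hl h
    push_cast at hm
    have hmβ : 0 ≤ (m : ℝ) * β := by positivity
    match u, hl, h with
    | false :: u, hl, h =>
      obtain ⟨t, ht, ht'⟩ := ih (x + β) u (by linarith) (by linarith) (by simpa using hl) h.2.2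
      refine ⟨t, by simp [List.replicate_succ, ht], ?_⟩
      convert ht' using 1; push_cast; ring
    | true :: u, hl, h =>
      exfalso
      have := h.1
      linarith

theorem opath_reach (β : ℝ) (hβ : 0 < β) : ∀ (m : ℕ) (x : ℝ) (u : List Bool),
    1 ≤ x + m * β → OPath β x u →
    ∃ p t x', u = p ++ t ∧ p.length ≤ m ∧ 0 < x' ∧ x' < β ∧ OPath β x' t := by
  intro m
  induction m with
  | zero =>
    intro x u hx h
    simp at hx
    match u, h with
    | [], h => exact ⟨[], [], β / 2, by simp, by simp, by linarith, by linarith, trivial⟩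
    | false :: u, h => have := h.2.1; linarith
    | true :: u, h => have := h.2.1; linarith
  | succ m ih =>
    intro x u hx h
    push_cast at hx
    match u, h with
    | [], h => exact ⟨[], [], β / 2, by simp, by simp, by linarith, by linarith, trivial⟩
    | false :: u, h =>
      obtain ⟨p, t, x', h1, h2, h3⟩ := ih (x + β) u (by linarith) h.2.2
      exact ⟨false :: p, t, x', by simp [h1], by simpa using h2, h3⟩
    | true :: u, h =>
      exact ⟨[true], u, _, by simp, by simp, by linarith [h.1], by linarith [h.2.1], h.2.2⟩

theorem opath_desub (β g : ℝ) (a : ℕ) (hβ : 0 < β) (hg : 0 < g) (ha : 1 ≤ a)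
    (hag : β * (a + g) = 1) : ∀ (n : ℕ) (x : ℝ) (u : List Bool), u.length ≤ n → 0 < x →
    x < β * (1 + g) → OPath β x u →
    ∃ u' q, u = u'.flatMap (sigmaW a) ++ q ∧ q.length ≤ a ∧
      OPath (g / (1 + g)) (1 - x / (β * (1 + g))) u' := by
  have ha' : (1 : ℝ) ≤ a := by exact_mod_cast ha
  have hD : 0 < β * (1 + g) := by positivity
  have hβ' : g / (1 + g) = g * β / (β * (1 + g)) := by field_simp
  have hβ2 : 1 - g / (1 + g) = β / (β * (1 + g)) := by field_simp; ring
  intro n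
  induction n with
  | zero =>
    intro x u hu _ _ _
    exact ⟨[], u, by simp, by omega, trivial⟩
  | succ n ih =>
    intro x u hu hx hxD h
    by_cases hl : u.length < a
    · exact ⟨[], u, by simp, by omega, trivial⟩
    push Not at hl
    by_cases hxg : x < g * β
    · match u, hl, hu, h with
      | [], hl, _, _ => simp at hl; omega
      | true :: u, hl, _, h =>
        exfalso
        have := h.1
        nlinarith
      | false :: u, hl, hu, h =>
        obtain ⟨u', q, h1, h2, h3⟩ := ih (x + β) u (by simpa using hu) (by linarith)
          (by linarith) h.2.2
        refine ⟨true :: u', q, by simp [h1, sigmaW], h2, ?_, ?_, ?_⟩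
        · have : x / (β * (1 + g)) < g / (1 + g) := by
            rw [hβ']; gcongr
          linarith
        · have : 0 < x / (β * (1 + g)) := by positivity
          linarith
        · convert h3 using 1
          rw [add_div, ← hβ2]; ring
    · push Not at hxg
      obtain ⟨t, ht, hp⟩ := opath_zeros β hβ (a - 1) x u hx
        (by push_cast [ha]; nlinarith) (by omega) h
      push_cast [ha] at hp
      match t, ht, hp with
      | [], ht, _ => simp [ht] at hl; omega
      | false :: t, ht, hp =>
        exfalso
        have := hp.2.1
        nlinarith
      | true :: t, ht, hp =>
        have h1 := hp.1
        have hxg' : g * β < x := by nlinarith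
        have hy : x + (↑a - 1) * β + β - 1 = x - g * β := by linarith
        have hp' := hp.2.2
        rw [hy] at hp'
        obtain ⟨u', q, h1, h2, h3⟩ := ih (x - g * β) t
          (by rw [ht] at hu; simp at hu; omega) (by linarith) (by nlinarith) hp'
        refine ⟨false :: u', q, by simp [ht, h1, sigmaW], h2, ?_, ?_, ?_⟩
        · have : x / (β * (1 + g)) < 1 := by rw [div_lt_one hD]; exact hxD
          linarith
        · have : g / (1 + g) < x / (β * (1 + g)) := by
            rw [hβ']; gcongr
          linarith
        · convert h3 using 1
          rw [sub_div, ← hβ']; ring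

theorem opath_step (β g : ℝ) (a : ℕ) (hβ : 0 < β) (hg : 0 < g) (hg1 : g < 1) (ha : 1 ≤ a)
    (hag : β * (a + g) = 1) (x : ℝ) (u : List Bool) (hx : 0 < x) (h : OPath β x u) :
    ∃ p u' q x', u = p ++ u'.flatMap (sigmaW a) ++ q ∧ p.length ≤ a + 1 ∧ q.length ≤ a + 1 ∧
      0 < x' ∧ OPath (g / (1 + g)) x' u' := by
  obtain ⟨p, t, x', h1, h2, h3, h4, h5⟩ := opath_reach β hβ (a + 1) x u
    (by push_cast; nlinarith) h
  have hD : 0 < β * (1 + g) := by positivity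
  obtain ⟨u', q, h6, h7, h8⟩ := opath_desub β g a hβ hg ha hag _ x' t le_rfl h3
    (by nlinarith) h5
  refine ⟨p, u', q, _, by simp [h1, h6], h2, by omega, ?_, h8⟩
  have : x' / (β * (1 + g)) < 1 := by rw [div_lt_one hD]; nlinarith
  linarith

theorem cfGauss_prop (α : ℝ) (hirr : Irrational α) (hα : α ∈ Set.Ioo (0 : ℝ) 1) (n : ℕ) :
    Irrational (cfGauss α n) ∧ 0 < cfGauss α n ∧ cfGauss α n < 1 := by
  induction n with
  | zero => exact ⟨hirr, hα.1, hα.2⟩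
  | succ n ih =>
    have h : Irrational (cfGauss α (n + 1)) := by
      simp only [cfGauss, Int.fract]
      exact ih.1.inv.sub_intCast _
    refine ⟨h, ?_, Int.fract_lt_one _⟩
    exact lt_of_le_of_ne (Int.fract_nonneg _) (Ne.symm h.ne_zero)

theorem cfCoeff_prop (α : ℝ) (hirr : Irrational α) (hα : α ∈ Set.Ioo (0 : ℝ) 1) (n : ℕ) :
    1 ≤ cfCoeff α (n + 1) ∧
      cfGauss α n * (cfCoeff α (n + 1) + cfGauss α (n + 1)) = 1 := by
  obtain ⟨_, h0, h1⟩ := cfGauss_prop α hirr hα n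
  have hinv : 1 ≤ (cfGauss α n)⁻¹ := (one_le_inv₀ h0).2 h1.le
  constructor
  · simp only [cfCoeff, Nat.add_sub_cancel]
    exact Nat.le_floor (by simpa using hinv)
  · have : (cfCoeff α (n + 1) : ℝ) + cfGauss α (n + 1) = (cfGauss α n)⁻¹ := by
      simp only [cfCoeff, Nat.add_sub_cancel, cfGauss]
      rw [natCast_floor_eq_intCast_floor (by linarith)]
      exact Int.floor_add_fract _
    rw [this]
    exact mul_inv_cancel₀ h0.ne'

/-- The angle at level `n`. -/
def betaN (α : ℝ) : ℕ → ℝ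
  | 0 => α
  | n + 1 => cfGauss α (n + 1) / (1 + cfGauss α (n + 1))

/-- The coefficient at level `n`. -/
def aN (α : ℝ) : ℕ → ℕ
  | 0 => cfCoeff α 1
  | n + 1 => cfCoeff α (n + 2) + 1

theorem aN_prop (α : ℝ) (hirr : Irrational α) (hα : α ∈ Set.Ioo (0 : ℝ) 1) (n : ℕ) :
    0 < betaN α n ∧ 1 ≤ aN α n ∧ betaN α n * (aN α n + cfGauss α (n + 1)) = 1 := by
  cases n with
  | zero =>
    obtain ⟨h1, h2⟩ := cfCoeff_prop α hirr hα 0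
    exact ⟨hα.1, h1, h2⟩
  | succ n =>
    obtain ⟨h1, h2⟩ := cfCoeff_prop α hirr hα (n + 1)
    obtain ⟨_, h0, _⟩ := cfGauss_prop α hirr hα (n + 1)
    refine ⟨by simp only [betaN]; positivity, by simp [aN], ?_⟩
    simp only [betaN, aN]
    push_cast
    rw [div_mul_eq_mul_div, div_eq_one_iff_eq (by positivity)]
    linarith

theorem tau_sigma (α : ℝ) (n : ℕ) (b : Bool) :
    (sigmaW (aN α n) b).flatMap (tauW (cfCoeff α) n) = tauW (cfCoeff α) (n + 1) b := by
  cases b with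
  | true => simp [sigmaW, tauW]
  | false =>
    cases n with
    | zero =>
      simp only [sigmaW, tauW, aN, sWord, List.flatMap_append]
      congr 1
      generalize cfCoeff α 1 - 1 = m
      induction m with
      | zero => simp
      | succ m ih => simp [List.replicate_succ, ih, tauW, sWord]
    | succ n => simp [sigmaW, tauW, aN, sWord, List.flatMap]

theorem flatMap_len (τ : Bool → List ℝ) (p : List Bool) :
    (p.flatMap τ).length ≤ p.length * ((τ true).length + (τ false).length) := by
  induction p with
  | nil => simp
  | cons b p ih =>
    simp only [List.flatMap_cons, List.length_append, List.length_cons]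
    rw [add_mul, one_mul]
    cases b <;> omega

theorem level_decomp (α : ℝ) (hirr : Irrational α) (hα : α ∈ Set.Ioo (0 : ℝ) 1) (n : ℕ) :
    ∃ L : ℕ, ∀ x u, 0 < x → OPath α x u → ∃ p u' q x',
      u.flatMap (tauW (cfCoeff α) 0) = p ++ u'.flatMap (tauW (cfCoeff α) n) ++ q ∧
      p.length ≤ L ∧ q.length ≤ L ∧ 0 < x' ∧ OPath (betaN α n) x' u' := by
  induction n with
  | zero => exact ⟨0, fun x u hx h => ⟨[], u, [], x, by simp, by simp, by simp, hx, h⟩⟩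
  | succ n ih =>
    obtain ⟨L, hL⟩ := ih
    set S := (tauW (cfCoeff α) n true).length + (tauW (cfCoeff α) n false).length with hS
    refine ⟨L + (aN α n + 1) * S, fun x u hx h => ?_⟩
    obtain ⟨p, v, q, y, h1, h2, h3, h4, h5⟩ := hL x u hx h
    obtain ⟨b1, b2, b3⟩ := aN_prop α hirr hα n
    obtain ⟨_, g0, g1⟩ := cfGauss_prop α hirr hα (n + 1)
    obtain ⟨p', v', q', y', k1, k2, k3, k4, k5⟩ := opath_step _ _ _ b1 g0 g1 b2 b3 y v h4 h5
    refine ⟨p ++ p'.flatMap (tauW (cfCoeff α) n), v', q'.flatMap (tauW (cfCoeff α) n) ++ q, y',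
      ?_, ?_, ?_, k4, k5⟩
    · rw [h1, k1]
      simp only [List.flatMap_append, List.append_assoc, List.flatMap_assoc, tau_sigma]
    · have := flatMap_len (tauW (cfCoeff α) n) p'
      rw [← hS] at this
      have := Nat.mul_le_mul_right S k2
      simp only [List.length_append]
      omega
    · have := flatMap_len (tauW (cfCoeff α) n) q'
      rw [← hS] at this
      have := Nat.mul_le_mul_right S k3
      simp only [List.length_append]
      omega

open Filter Topology in
theorem code_exists (α θ : ℝ) (hα : α ∈ Set.Ioo (0 : ℝ) 1) (c : ℕ → ℕ) : ∀ (m : ℕ) (k : ℤ),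
    ∃ u : List Bool, ((List.range m).map fun i : ℕ => sturmian α θ (k + i)) =
      u.flatMap (tauW c 0) ∧ ∀ᶠ x in 𝓝[>] (Int.fract (k * α + θ)), OPath α x u := by
  intro m
  induction m with
  | zero => intro k; exact ⟨[], by simp, by simp [OPath]⟩
  | succ m ih =>
    intro k
    obtain ⟨u, h1, h2⟩ := ih (k + 1)
    set y := Int.fract (k * α + θ) with hy
    have hy0 : 0 ≤ y := Int.fract_nonneg _
    have hy1 : y < 1 := Int.fract_lt_one _
    have hself : ∀ᶠ x in 𝓝[>] y, y < x := eventually_mem_nhdsWithin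
    have hfl : (k * α + θ : ℝ) = ⌊(k * α + θ : ℝ)⌋ + y := (Int.floor_add_fract _).symm
    have hlist : ((List.range (m + 1)).map fun i : ℕ => sturmian α θ (k + i)) =
        sturmian α θ k :: u.flatMap (tauW c 0) := by
      rw [List.range_succ_eq_map, ← h1]
      simp only [List.map_cons, List.map_map]
      congr 1
      · simp
      · apply List.map_congr_left
        intro i _
        simp only [Function.comp]
        congr 1
        push_cast; ring
    rw [hlist]
    by_cases hc : 1 - α ≤ y
    · have hs : sturmian α θ k = 1 := by
        simp only [sturmian]; rw [if_pos ⟨hc, hy1⟩]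
      have hn : Int.fract (((k + 1 : ℤ) : ℝ) * α + θ) = y + α - 1 := by
        rw [Int.fract_eq_iff]
        refine ⟨by linarith, by linarith [hα.2], ⌊(k * α + θ : ℝ)⌋ + 1, ?_⟩
        push_cast; linarith
      rw [hn] at h2
      refine ⟨true :: u, by simp [hs, tauW, sWord], ?_⟩
      have ht : Tendsto (fun x => x + α - 1) (𝓝[>] y) (𝓝[>] (y + α - 1)) := by
        apply tendsto_nhdsWithin_iff.2
        refine ⟨?_, ?_⟩
        · apply Tendsto.mono_left _ nhdsWithin_le_nhds
          exact Continuous.tendsto (by fun_prop) y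
        · filter_upwards [hself] with x hx
          simp only [Set.mem_Ioi]; linarith
      filter_upwards [ht.eventually h2, hself,
        nhdsWithin_le_nhds (eventually_lt_nhds hy1)] with x a b d
      exact ⟨by linarith, d, a⟩
    · push Not at hc
      have hs : sturmian α θ k = 0 := by
        simp only [sturmian]; rw [if_neg (fun h => absurd h.1 (by linarith))]
      have hn : Int.fract (((k + 1 : ℤ) : ℝ) * α + θ) = y + α := by
        rw [Int.fract_eq_iff]
        refine ⟨by linarith [hα.1], by linarith [hα.2], ⌊(k * α + θ : ℝ)⌋, ?_⟩
        push_cast; linarith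
      rw [hn] at h2
      refine ⟨false :: u, by simp [hs, tauW, sWord], ?_⟩
      have ht : Tendsto (fun x => x + α) (𝓝[>] y) (𝓝[>] (y + α)) := by
        apply tendsto_nhdsWithin_iff.2
        refine ⟨?_, ?_⟩
        · apply Tendsto.mono_left _ nhdsWithin_le_nhds
          exact Continuous.tendsto (by fun_prop) y
        · filter_upwards [hself] with x hx
          simp only [Set.mem_Ioi]; linarith
      filter_upwards [ht.eventually h2, hself,
        nhdsWithin_le_nhds (eventually_lt_nhds hc)] with x a b d
      exact ⟨by linarith, d, a⟩

theorem range_coe (v : ℤ → ℝ) (k : ℤ) (m : ℕ) :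
    ((List.range m).map fun i => v (k + i)) = (List.range m).map fun i : ℕ => v (k + i) := by
  simp only [bind_pure_comp, List.map_eq_map, List.map_map]
  rfl

theorem walpha_code (α : ℝ) (hα : α ∈ Set.Ioo (0 : ℝ) 1) (c : ℕ → ℕ) (w : List ℝ)
    (hw : w ∈ Walpha α) : ∃ x u, 0 < x ∧ w = u.flatMap (tauW c 0) ∧ OPath α x u := by
  obtain ⟨θ, _, _, k, hk⟩ := hw
  rw [range_coe] at hk
  obtain ⟨u, h1, h2⟩ := code_exists α θ hα c w.length k
  obtain ⟨x, hx1, hx2⟩ := (h2.and (eventually_mem_nhdsWithin)).exists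
  exact ⟨x, u, lt_of_le_of_lt (Int.fract_nonneg _) hx2, by rw [← h1]; exact hk, hx1⟩

theorem walpha_infix (α : ℝ) (p b q : List ℝ) (hb : b ≠ []) (h : p ++ b ++ q ∈ Walpha α) :
    b ∈ Walpha α := by
  obtain ⟨θ, hθ, _, k, hk⟩ := h
  refine ⟨θ, hθ, hb, k + p.length, ?_⟩
  rw [range_coe] at hk ⊢
  apply List.ext_getElem
  · simp
  · intro i hi _
    have h1 : (p ++ b ++ q)[p.length + i]? = b[i]? := by
      rw [List.append_assoc, List.getElem?_append_right (by omega)]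
      rw [Nat.add_sub_cancel_left, List.getElem?_append_left hi]
    rw [hk] at h1
    have hlt : p.length + i < p.length + (b.length + q.length) := by omega
    rw [List.getElem?_eq_getElem hi, List.getElem?_map,
      List.getElem?_range (by simpa using hlt)] at h1
    simp only [Option.map_some, Option.some.injEq] at h1
    rw [← h1]
    simp [add_assoc]

/-- `F` extended by zero to the empty word. -/
def extF (F : List ℝ → ℝ) (w : List ℝ) : ℝ := if w = [] then 0 else F w

theorem extF_sub (α : ℝ) (F : List ℝ → ℝ)
    (hsub : ∀ a b : List ℝ, a ∈ Walpha α → b ∈ Walpha α → a ++ b ∈ Walpha α →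
      F (a ++ b) ≤ F a + F b) (a b : List ℝ) (h : a ++ b ∈ Walpha α) :
    extF F (a ++ b) ≤ extF F a + extF F b := by
  by_cases ha : a = []
  · simp [ha, extF]
  by_cases hb : b = []
  · simp [hb, extF]
  have h1 := walpha_infix α [] a b ha (by simpa using h)
  have h2 := walpha_infix α a b [] hb (by simpa using h)
  simp only [extF, List.append_eq_nil_iff, ha, hb, and_self, if_false]
  exact hsub a b h1 h2 h

theorem extF_blocks (α : ℝ) (F : List ℝ → ℝ)
    (hsub : ∀ a b : List ℝ, a ∈ Walpha α → b ∈ Walpha α → a ++ b ∈ Walpha α →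
      F (a ++ b) ≤ F a + F b) {ι : Type} (τ : ι → List ℝ) (M : ℝ) :
    ∀ (u : List ι), (∀ i ∈ u, extF F (τ i) ≤ M * (τ i).length) →
    (u.flatMap τ = [] ∨ u.flatMap τ ∈ Walpha α) →
    extF F (u.flatMap τ) ≤ M * (u.flatMap τ).length := by
  intro u
  induction u with
  | nil => intro _ _; simp [extF]
  | cons b u ih =>
    intro hM hw
    rcases hw with hw | hw
    · simp [hw, extF]
    · rw [List.flatMap_cons] at hw ⊢
      have hu : u.flatMap τ = [] ∨ u.flatMap τ ∈ Walpha α := by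
        by_cases h : u.flatMap τ = []
        · exact Or.inl h
        · exact Or.inr (walpha_infix α (τ b) _ [] h (by simpa using hw))
      have h1 := extF_sub α F hsub _ _ hw
      have h2 := ih (fun i hi => hM i (by simp [hi])) hu
      have h3 := hM b (by simp)
      rw [List.length_append]
      push_cast
      linarith

theorem walpha_letters (α : ℝ) (w : List ℝ) (hw : w ∈ Walpha α) (c : ℝ) (hc : c ∈ w) :
    c = 0 ∨ c = 1 := by
  obtain ⟨θ, _, _, k, hk⟩ := hw
  rw [hk] at hc
  simp only [List.mem_map] at hc
  obtain ⟨i, _, rfl⟩ := hc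
  unfold sturmian
  split_ifs <;> simp

theorem extF_short (α : ℝ) (F : List ℝ → ℝ)
    (hsub : ∀ a b : List ℝ, a ∈ Walpha α → b ∈ Walpha α → a ++ b ∈ Walpha α →
      F (a ++ b) ≤ F a + F b) (w : List ℝ) (hw : w = [] ∨ w ∈ Walpha α) :
    extF F w ≤ max |F [0]| |F [1]| * w.length := by
  have hfl : w.flatMap (fun c => [c]) = w := by simp
  have := extF_blocks α F hsub (ι := {c : ℝ // c = 0 ∨ c = 1})
    (fun c => [c.1]) (max |F [0]| |F [1]|)
  have hex : ∃ v : List {c : ℝ // c = 0 ∨ c = 1}, v.flatMap (fun c => [c.1]) = w := by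
    have hl : ∀ c ∈ w, c = 0 ∨ c = 1 := by
      rcases hw with rfl | hw
      · simp
      · exact walpha_letters α w hw
    refine ⟨w.attach.map fun c => ⟨c.1, hl c.1 c.2⟩, ?_⟩
    rw [← List.map_eq_flatMap]
    simp
  obtain ⟨v, hv⟩ := hex
  have h := this v ?_ (by rw [hv]; exact hw)
  · rwa [hv] at h
  · rintro ⟨c, rfl | rfl⟩ _
    · simp only [extF]; simp [le_abs_self]
    · simp only [extF]; simp [le_abs_self]

theorem sWord_ne_nil (c : ℕ → ℕ) : ∀ n, sWord c n ≠ []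
  | 0 => by simp [sWord]
  | 1 => by simp [sWord]
  | 2 => by simp [sWord]
  | n + 3 => by simp [sWord, sWord_ne_nil c (n + 1)]

theorem main_part (α : ℝ) (hirr : Irrational α) (hα : α ∈ Set.Ioo (0 : ℝ) 1)
    (F : List ℝ → ℝ)
    (hnonneg : ∀ w ∈ Walpha α, 0 ≤ F w)
    (hsub : ∀ a b : List ℝ, a ∈ Walpha α → b ∈ Walpha α → a ++ b ∈ Walpha α →
      F (a ++ b) ≤ F a + F b) (n : ℕ) (ε : ℝ) (hε : 0 < ε) :
    ∃ N : ℕ, ∀ w ∈ Walpha α, N ≤ w.length →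
      F w / w.length ≤
        max (F (sWord (cfCoeff α) (n + 1)) / (sWord (cfCoeff α) (n + 1)).length)
          (F (sWord (cfCoeff α) n) / (sWord (cfCoeff α) n).length) + ε := by
  obtain ⟨L, hL⟩ := level_decomp α hirr hα n
  set M := max (F (sWord (cfCoeff α) (n + 1)) / (sWord (cfCoeff α) (n + 1)).length)
          (F (sWord (cfCoeff α) n) / (sWord (cfCoeff α) n).length) with hM
  set K := max |F [0]| |F [1]| with hK
  have hK0 : 0 ≤ K := le_max_of_le_left (abs_nonneg _)
  obtain ⟨N, hN⟩ := exists_nat_ge (2 * L * K / ε)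
  refine ⟨N + 2 * L + 1, fun w hw hlen => ?_⟩
  obtain ⟨x, u, hx, hwu, hp⟩ := walpha_code α hα (cfCoeff α) w hw
  obtain ⟨p, v, q, -, h1, h2, h3, -, -⟩ := hL x u hx hp
  rw [← hwu] at h1
  have hwne : w ≠ [] := by rintro rfl; simp at hlen
  set τ := tauW (cfCoeff α) n with hτ
  have hτne : ∀ b, τ b ≠ [] := by
    intro b; cases b <;> simp [hτ, tauW, sWord_ne_nil]
  have hτM : ∀ b, F (τ b) ≤ M * (τ b).length := by
    intro b
    have hl : (0 : ℝ) < (τ b).length := by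
      exact_mod_cast List.length_pos_of_ne_nil (hτne b)
    rw [← div_le_iff₀ hl]
    cases b
    · exact le_max_left _ _
    · exact le_max_right _ _
  have hB : v.flatMap τ ≠ [] := by
    intro h
    rw [h] at h1
    have := congrArg List.length h1
    simp at this
    omega
  have hpBq : p ++ v.flatMap τ ++ q ∈ Walpha α := h1 ▸ hw
  have hBW := walpha_infix α p _ q hB hpBq
  have hM0 : 0 ≤ M := by
    match v, hB, hBW with
    | [], hB, _ => simp at hB
    | b :: v, _, hBW =>
      have hb : τ b ∈ Walpha α := walpha_infix α [] (τ b) (v.flatMap τ) (hτne b)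
        (by simpa using hBW)
      have h0 := (hnonneg _ hb).trans (hτM b)
      have hl : (0 : ℝ) < (τ b).length := by
        exact_mod_cast List.length_pos_of_ne_nil (hτne b)
      exact nonneg_of_mul_nonneg_left h0 hl
  have hBF : extF F (v.flatMap τ) ≤ M * (v.flatMap τ).length :=
    extF_blocks α F hsub τ M v (fun b _ => by
      simp only [extF, hτne b, if_false]; exact hτM b) (Or.inr hBW)
  have hpW : p = [] ∨ p ∈ Walpha α := by
    by_cases h : p = []
    · exact Or.inl h
    · exact Or.inr (walpha_infix α [] p (v.flatMap τ ++ q) h (by simpa using hpBq))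
  have hqW : q = [] ∨ q ∈ Walpha α := by
    by_cases h : q = []
    · exact Or.inl h
    · exact Or.inr (walpha_infix α (p ++ v.flatMap τ) q [] h (by simpa using hpBq))
  have hpB : p ++ v.flatMap τ ∈ Walpha α :=
    walpha_infix α [] _ q (by simp only [ne_eq, List.append_eq_nil_iff, hB, and_false, not_false_eq_true]) (by simpa using hpBq)
  have e1 := extF_sub α F hsub _ _ hpBq
  have e2 := extF_sub α F hsub _ _ hpB
  have e3 := extF_short α F hsub p hpW
  have e4 := extF_short α F hsub q hqW
  have e5 : extF F w = F w := by simp [extF, hwne]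
  rw [← h1, e5] at e1
  have hlenw : (w.length : ℝ) = p.length + (v.flatMap τ).length + q.length := by
    rw [h1]; simp only [List.length_append]; push_cast; ring
  have hw0 : (0 : ℝ) < w.length := by exact_mod_cast List.length_pos_of_ne_nil hwne
  rw [div_le_iff₀ hw0]
  have hpL : (p.length : ℝ) ≤ L := by exact_mod_cast h2
  have hqL : (q.length : ℝ) ≤ L := by exact_mod_cast h3
  have hNw : (N : ℝ) ≤ w.length := by exact_mod_cast (by omega : N ≤ w.length)
  have f1 : K * p.length ≤ K * L := by gcongr
  have f2 : K * q.length ≤ K * L := by gcongr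
  have f3 : 2 * L * K ≤ ε * w.length := by
    rw [div_le_iff₀ hε] at hN
    nlinarith
  have f4 : M * (v.flatMap τ).length ≤ M * w.length := by
    apply mul_le_mul_of_nonneg_left _ hM0
    rw [hlenw]
    have : (0 : ℝ) ≤ p.length := by positivity
    have : (0 : ℝ) ≤ q.length := by positivity
    linarith
  linarith

end

theorem subadditive_limsup_le_max
    (α : ℝ) (hirr : Irrational α) (hα : α ∈ Set.Ioo (0 : ℝ) 1)
    (F : List ℝ → ℝ)
    (hnonneg : ∀ w ∈ Walpha α, 0 ≤ F w)
    (hsub : ∀ a b : List ℝ, a ∈ Walpha α → b ∈ Walpha α → a ++ b ∈ Walpha α →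
      F (a ++ b) ≤ F a + F b) :
    (∀ n : ℕ, 1 ≤ n → ∀ ε > (0 : ℝ), ∃ N : ℕ, ∀ w ∈ Walpha α, N ≤ w.length →
      F w / w.length ≤
        max (F (sWord (cfCoeff α) (n + 1)) / (sWord (cfCoeff α) (n + 1)).length)
          (F (sWord (cfCoeff α) n) / (sWord (cfCoeff α) n).length) + ε) ∧
    (∀ ε > (0 : ℝ), ∃ N : ℕ, ∀ w ∈ Walpha α, N ≤ w.length →
      F w / w.length ≤
        (⨅ n : ℕ, max (F (sWord (cfCoeff α) (n + 2)) / (sWord (cfCoeff α) (n + 2)).length)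
          (F (sWord (cfCoeff α) (n + 1)) / (sWord (cfCoeff α) (n + 1)).length)) + ε) := by
  constructor
  · intro n _ ε hε
    exact main_part α hirr hα F hnonneg hsub n ε hε
  · intro ε hε
    obtain ⟨n, hn⟩ := exists_lt_of_ciInf_lt (lt_add_of_pos_right
      (⨅ n : ℕ, max (F (sWord (cfCoeff α) (n + 2)) / (sWord (cfCoeff α) (n + 2)).length)
          (F (sWord (cfCoeff α) (n + 1)) / (sWord (cfCoeff α) (n + 1)).length)) (half_pos hε))
    obtain ⟨N, hN⟩ := main_part α hirr hα F hnonneg hsub (n + 1) (ε / 2) (half_pos hε)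
    refine ⟨N, fun w hw hl => ?_⟩
    have := hN w hw hl
    linarith
end
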